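/- arXiv:2206.01031 — 7 statements merged into one kernel-verified Lean document; each statement's English description precedes it below -/
import Mathlib

section
/- The subgroup of the group of bijections of ℝ⁵ generated by the three maps s, t, i is isomorphic to the symmetric group on five letters S₅; in particular it has exactly 120 elements. -/
noncomputable section

/-- Quintuplets `(z₁, z₂, z₃, z₄, z₀)` of real numbers. -/
abbrev R5 : Type := ℝ × ℝ × ℝ × ℝ × ℝ

/-- The bijection `s(z₁,z₂,z₃,z₄,z₀) = (z₀,z₄,z₃,z₂,z₁)`. -/
def sPerm : Equiv.Perm R5 where
  toFun z := (z.2.2.2.2, z.2.2.2.1, z.2.2.1, z.2.1, z.1)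
  invFun z := (z.2.2.2.2, z.2.2.2.1, z.2.2.1, z.2.1, z.1)
  left_inv z := rfl
  right_inv z := rfl

/-- The bijection `t(z₁,z₂,z₃,z₄,z₀) = (z₂,−z₃−1,−z₁−1,z₄,z₀)`. -/
def tPerm : Equiv.Perm R5 where
  toFun z := (z.2.1, -z.2.2.1 - 1, -z.1 - 1, z.2.2.2.1, z.2.2.2.2)
  invFun z := (-z.2.2.1 - 1, z.1, -z.2.1 - 1, z.2.2.2.1, z.2.2.2.2)
  left_inv z := by
    obtain ⟨a, b, c, d, e⟩ := z
    simp only [Prod.mk.injEq, and_true, true_and]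
    constructor <;> ring
  right_inv z := by
    obtain ⟨a, b, c, d, e⟩ := z
    simp only [Prod.mk.injEq, and_true, true_and]
    constructor <;> ring

/-- The bijection `i(z₁,z₂,z₃,z₄,z₀) = (z₁,z₂,z₃,z₀,z₄)`. -/
def iPerm : Equiv.Perm R5 where
  toFun z := (z.1, z.2.1, z.2.2.1, z.2.2.2.2, z.2.2.2.1)
  invFun z := (z.1, z.2.1, z.2.2.1, z.2.2.2.2, z.2.2.2.1)
  left_inv z := rfl
  right_inv z := rfl

/-!
Replacing `z₃` by `-z₃ - 1` turns `s`, `t` and `i` into permutations of the five coordinates: the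
reversal, a 3-cycle and an adjacent transposition. The product of the first two is a 5-cycle, and a
5-cycle together with a transposition generates `S₅` because 5 is prime. Finally, `S₅` acts
faithfully on `ℝ⁵`.
-/

open Equiv Equiv.Perm

section General

variable {G H : Type*} [Group G] [Group H]

theorem nonempty_closure_image_mulEquiv {f : G →* H} (hf : Function.Injective f) {S : Set G}
    (hS : Subgroup.closure S = ⊤) : Nonempty (Subgroup.closure (f '' S) ≃* G) := by
  have closure_image : Subgroup.closure (f '' S) = f.range := by
    rw [← MonoidHom.map_closure, hS, MonoidHom.range_eq_map]
  exact ⟨(MulEquiv.subgroupCongr closure_image).trans (MonoidHom.ofInjective hf).symm⟩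

variable {ι X β : Type*}

theorem closure_eq_top_of_isCycle_of_isSwap [Fintype ι] [DecidableEq ι]
    (hι : (Fintype.card ι).Prime) {S : Set (Perm ι)} {σ τ : Perm ι} (hσ : σ.IsCycle)
    (hσ_support : σ.support = Finset.univ) (hτ : τ.IsSwap)
    (hσS : σ ∈ Subgroup.closure S) (hτS : τ ∈ Subgroup.closure S) :
    Subgroup.closure S = ⊤ := by
  rw [eq_top_iff, ← closure_prime_cycle_swap hι hσ hσ_support hτ, Subgroup.closure_le]
  exact Set.pair_subset hσS hτS

/-- The action of the permutations of `ι` on a type `X` coordinatized by `e : X ≃ (ι → β)`: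
`σ` moves the `j`-th coordinate to position `σ j`. -/
def permuteCoords (e : X ≃ (ι → β)) : Perm ι →* Perm X :=
  e.symm.permCongrHom.toMonoidHom.comp
    { toFun := fun σ ↦ σ.arrowCongr (Equiv.refl β)
      map_one' := rfl
      map_mul' := fun _ _ ↦ rfl }

theorem permuteCoords_apply (e : X ≃ (ι → β)) (σ : Perm ι) (x : X) :
    e (permuteCoords e σ x) = e x ∘ σ.symm :=
  e.apply_symm_apply _

theorem permuteCoords_eq_of_forall_apply {e : X ≃ (ι → β)} {σ : Perm ι} {g : Perm X}
    (h : ∀ x j, e (g x) (σ j) = e x j) : permuteCoords e σ = g := by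
  ext1 x
  apply e.injective
  rw [permuteCoords_apply]
  funext j
  simpa using (h x (σ.symm j)).symm

theorem permuteCoords_injective [Nontrivial β] (e : X ≃ (ι → β)) :
    Function.Injective (permuteCoords e) := by
  intro σ τ h
  have comp_symm_eq : ∀ v : ι → β, v ∘ σ.symm = v ∘ τ.symm := fun v ↦ by
    simpa only [permuteCoords_apply, e.apply_symm_apply] using
      congrArg (fun g : Perm X ↦ e (g (e.symm v))) h
  have symm_eq : ⇑σ.symm = ⇑τ.symm := by
    obtain ⟨a, b, hab⟩ := exists_pair_ne β
    classical
    funext j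
    by_contra hj
    have indicator_eq := congrFun (comp_symm_eq (Function.update (fun _ ↦ b) (σ.symm j) a)) j
    rw [Function.comp_apply, Function.comp_apply, Function.update_self,
      Function.update_of_ne (Ne.symm hj)] at indicator_eq
    exact hab indicator_eq
  exact symm_bijective.injective (DFunLike.coe_injective symm_eq)

end General

/-- The coordinates `(z₁, z₂, -z₃ - 1, z₄, z₀)` on `ℝ⁵`, indexed in this order by `0, …, 4`, in
which `s`, `t` and `i` act by permutations. -/
def flipThird : R5 ≃ (Fin 5 → ℝ) where
  toFun z := ![z.1, z.2.1, -z.2.2.1 - 1, z.2.2.2.1, z.2.2.2.2]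
  invFun v := (v 0, v 1, -v 2 - 1, v 3, v 4)
  left_inv z := by simp
  right_inv v := by
    funext j
    fin_cases j <;> simp

theorem permuteCoords_flipThird_revPerm : permuteCoords flipThird Fin.revPerm = sPerm :=
  permuteCoords_eq_of_forall_apply fun _ j ↦ by fin_cases j <;> rfl

theorem permuteCoords_flipThird_threeCycle : permuteCoords flipThird c[0, 2, 1] = tPerm :=
  permuteCoords_eq_of_forall_apply fun z j ↦ by
    fin_cases j
    · change -(-z.1 - 1) - 1 = z.1
      ring
    all_goals rfl

theorem permuteCoords_flipThird_swap : permuteCoords flipThird (swap 3 4) = iPerm :=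
  permuteCoords_eq_of_forall_apply fun _ j ↦ by fin_cases j <;> rfl

theorem threeCycle_mul_revPerm :
    (c[0, 2, 1] * Fin.revPerm : Perm (Fin 5)) = c[0, 4, 2, 1, 3] := by
  decide

theorem closure_revPerm_threeCycle_swap :
    Subgroup.closure {Fin.revPerm, c[0, 2, 1], swap 3 4} = (⊤ : Subgroup (Perm (Fin 5))) := by
  have fiveCycle_isCycle : (c[0, 4, 2, 1, 3] : Perm (Fin 5)).IsCycle :=
    List.isCycle_formPerm (by decide) (by decide)
  have fiveCycle_mem : c[0, 4, 2, 1, 3] ∈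
      Subgroup.closure {Fin.revPerm, c[0, 2, 1], (swap 3 4 : Perm (Fin 5))} := by
    rw [← threeCycle_mul_revPerm]
    exact mul_mem (Subgroup.subset_closure (by simp)) (Subgroup.subset_closure (by simp))
  exact closure_eq_top_of_isCycle_of_isSwap (by norm_num) fiveCycle_isCycle (by decide)
    ⟨3, 4, by decide, rfl⟩ fiveCycle_mem (Subgroup.subset_closure (by simp))

theorem image_permuteCoords_flipThird :
    permuteCoords flipThird '' {Fin.revPerm, c[0, 2, 1], swap 3 4} = {sPerm, tPerm, iPerm} := by
  rw [Set.image_insert_eq, Set.image_pair, permuteCoords_flipThird_revPerm,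
    permuteCoords_flipThird_threeCycle, permuteCoords_flipThird_swap]

theorem stmt1 :
    Nonempty ((Subgroup.closure {sPerm, tPerm, iPerm} : Subgroup (Equiv.Perm R5)) ≃*
      Equiv.Perm (Fin 5)) ∧
    Nat.card (Subgroup.closure {sPerm, tPerm, iPerm} : Subgroup (Equiv.Perm R5)) = 120 := by
  rw [← image_permuteCoords_flipThird]
  obtain ⟨φ⟩ := nonempty_closure_image_mulEquiv (permuteCoords_injective flipThird)
    closure_revPerm_threeCycle_swap
  refine ⟨⟨φ⟩, ?_⟩
  rw [Nat.card_congr φ.toEquiv, Nat.card_perm, Nat.card_fin]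
  rfl
end
end

section
/- Let μ : ℤ → ℂ be a sequence satisfying, for all n ∈ ℤ, both (μ_n − μ_{n+1})² = 2(μ_n + μ_{n+1}) and μ_{n+2} − 2μ_{n+1} + μ_n = 2. Then there exists a ∈ ℂ such that μ_n = (n+a)(n+a+1) for every n ∈ ℤ. -/
/-!
By the second recurrence the first difference `μ (n + 1) - μ n` is affine in `n`, so it equals
`2 * (n + a + 1)` for a suitable `a`. The first recurrence, read as
`4 * μ n = (μ (n + 1) - μ n) ^ 2 - 2 * (μ (n + 1) - μ n)`, then determines `μ n`. Moreover
the difference of the two sides of the first recurrence does not depend on `n` when the second one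
holds, so it suffices to know the first recurrence at a single index.
-/

theorem eq_add_zsmul_of_forall_map_add_one {G : Type*} [AddGroup G] {f : ℤ → G} {d : G}
    (hf : ∀ n, f (n + 1) = f n + d) (n : ℤ) : f n = f 0 + n • d := by
  simpa using AddConstMapClass.map_add_int' (⟨f, hf⟩ : AddConstMap ℤ G 1 d) 0 n

section ConstantSecondDifference

variable {R : Type*} [CommRing R] {μ : ℤ → R} {c : R}

theorem sub_eq_of_second_difference_eq (hμ : ∀ n, μ (n + 2) - 2 * μ (n + 1) + μ n = c) (n : ℤ) :
    μ (n + 1) - μ n = μ 1 - μ 0 + n * c := by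
  have hstep (k : ℤ) : μ (k + 1 + 1) - μ (k + 1) = μ (k + 1) - μ k + c := by
    rw [add_assoc, one_add_one_eq_two]
    linear_combination hμ k
  simpa using eq_add_zsmul_of_forall_map_add_one (f := fun k ↦ μ (k + 1) - μ k) hstep n

theorem sq_sub_sub_mul_add_eq_of_second_difference_eq
    (hμ : ∀ n, μ (n + 2) - 2 * μ (n + 1) + μ n = c) (m n : ℤ) :
    (μ m - μ (m + 1)) ^ 2 - c * (μ m + μ (m + 1)) =
      (μ n - μ (n + 1)) ^ 2 - c * (μ n + μ (n + 1)) := by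
  let E (k : ℤ) : R := (μ k - μ (k + 1)) ^ 2 - c * (μ k + μ (k + 1))
  have hE (k : ℤ) : E (k + 1) = E k + 0 := by
    simp only [E, add_assoc, one_add_one_eq_two]
    linear_combination (μ (k + 2) - μ k) * hμ k
  have hE₀ (k : ℤ) : E k = E 0 := by
    simpa using eq_add_zsmul_of_forall_map_add_one hE k
  exact (hE₀ m).trans (hE₀ n).symm

end ConstantSecondDifference

theorem stmt5_general {R : Type*} [CommRing R] (two_unit : IsUnit (2 : R)) (μ : ℤ → R) (m : ℤ)
    (h1 : (μ m - μ (m + 1)) ^ 2 = 2 * (μ m + μ (m + 1)))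
    (h2 : ∀ n : ℤ, μ (n + 2) - 2 * μ (n + 1) + μ n = 2) :
    ∃ a : R, ∀ n : ℤ, μ n = ((n : R) + a) * ((n : R) + a + 1) := by
  obtain ⟨b, hb⟩ : 2 ∣ μ 1 - μ 0 := two_unit.dvd
  refine ⟨b - 1, fun n ↦ ?_⟩
  have hdiff : μ (n + 1) = μ n + 2 * (n + b) := by
    linear_combination sub_eq_of_second_difference_eq h2 n + hb
  have hsq : (μ n - μ (n + 1)) ^ 2 = 2 * (μ n + μ (n + 1)) := by
    linear_combination h1 - sq_sub_sub_mul_add_eq_of_second_difference_eq h2 m n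
  rw [hdiff] at hsq
  apply (two_unit.mul two_unit).mul_left_cancel
  linear_combination -hsq

theorem stmt5 (μ : ℤ → ℂ)
    (h1 : ∀ n : ℤ, (μ n - μ (n + 1)) ^ 2 = 2 * (μ n + μ (n + 1)))
    (h2 : ∀ n : ℤ, μ (n + 2) - 2 * μ (n + 1) + μ n = 2) :
    ∃ a : ℂ, ∀ n : ℤ, μ n = ((n : ℂ) + a) * ((n : ℂ) + a + 1) :=
  stmt5_general (isUnit_iff_ne_zero.mpr two_ne_zero) μ 0 (h1 0) h2
end

section
/- In R(4), the element w_{1,2,3} is central: it commutes with C_I for every nonempty subset I ⊆ {1,2,3,4} (in particular w_{1,2,3} commutes with C₃₄, C₁₂₄, C₁₃₄, C₂₃₄). -/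
noncomputable section

open Finset

variable {A : Type*} [Ring A] [Algebra ℂ A]

/-- Commutator `[a,b] = ab − ba`. -/
def cm (a b : A) : A := a * b - b * a

/-- Anticommutator `{a,b} = ab + ba`. -/
def acm (a b : A) : A := a * b + b * a

/-- Relations (R1): `[C_I, C_J] = 0` whenever `I ∩ J = ∅`, `I ⊆ J` or `J ⊆ I`. -/
def RelR1 (C : Finset (Fin 4) → A) : Prop :=
  ∀ I J : Finset (Fin 4), (I ∩ J = ∅ ∨ I ⊆ J ∨ J ⊆ I) → cm (C I) (C J) = 0

/-- Relations (R2): `C_I = (1/2)∑_{i≠j∈I} C_{ij} − (|I|−2)∑_{i∈I} C_i` for `|I| ≥ 3`. -/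
def RelR2 (C : Finset (Fin 4) → A) : Prop :=
  ∀ I : Finset (Fin 4), 3 ≤ I.card →
    C I = ((1 : ℂ)/2) • (∑ i ∈ I, ∑ j ∈ I \ {i}, C {i, j})
      - ((I.card : ℂ) - 2) • ∑ i ∈ I, C {i}

/-- Relations (R3), for nonempty pairwise disjoint `I, J, K`. -/
def RelR3 (C : Finset (Fin 4) → A) : Prop :=
  ∀ I J K : Finset (Fin 4), I.Nonempty → J.Nonempty → K.Nonempty →
    Disjoint I J → Disjoint J K → Disjoint I K →
    cm (C (I ∪ J)) (C (J ∪ K)) = cm (C (J ∪ K)) (C (I ∪ K)) ∧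
    cm (C (J ∪ K)) (C (I ∪ K)) = cm (C (I ∪ K)) (C (I ∪ J)) ∧
    cm (C (J ∪ K)) (cm (C (I ∪ J)) (C (J ∪ K))) =
      2 * (C (I ∪ K) * C (J ∪ K)) - 2 * (C (J ∪ K) * C (I ∪ J))
        + 2 * ((C J - C K) * (C (I ∪ J ∪ K) - C I))

/-- Relations (R4), for pairwise distinct `i, j, k, l`. -/
def RelR4 (C : Finset (Fin 4) → A) : Prop :=
  ∀ i j k l : Fin 4, i ≠ j → i ≠ k → i ≠ l → j ≠ k → j ≠ l → k ≠ l →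
    ((1 : ℂ)/2) • cm (C {k, l}) (cm (C {i, j}) (C {j, k})) =
      C {i, k} * C {j, l} - C {i, l} * C {j, k}
      + (C {i} + C {l}) * C {j, k} + (C {j} + C {k}) * C {i, l}
      - (C {j} + C {l}) * C {i, k} - (C {i} + C {k}) * C {j, l}
      + (C {i} - C {j}) * (C {l} - C {k})

/-- Relations (R5), for pairwise distinct `i, j, k, l`. -/
def RelR5 (C : Finset (Fin 4) → A) : Prop :=
  ∀ i j k l : Fin 4, i ≠ j → i ≠ k → i ≠ l → j ≠ k → j ≠ l → k ≠ l →
    ((1 : ℂ)/2) • cm (cm (C {i, j}) (C {j, k})) (cm (C {j, k}) (C {k, l})) =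
      -((cm (C {i, j}) (C {j, l}) + cm (C {i, k}) (C {k, l})) * (C {j, k} - C {j} - C {k}))

/-- The Casimir-type element `w_{I,J,K}` of the Racah algebra. -/
def wElt (C : Finset (Fin 4) → A) (I J K : Finset (Fin 4)) : A :=
  ((1 : ℂ)/4) • (cm (C (I ∪ J)) (C (J ∪ K))) ^ 2
  - ((1 : ℂ)/2) • acm ((C (I ∪ J)) ^ 2) (C (J ∪ K))
  - ((1 : ℂ)/2) • acm (C (I ∪ J)) ((C (J ∪ K)) ^ 2)
  + (C (I ∪ J)) ^ 2 + (C (J ∪ K)) ^ 2 + acm (C (I ∪ J)) (C (J ∪ K))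
  + ((1 : ℂ)/2) • ((C I + C J + C K + C (I ∪ J ∪ K)) *
      (acm (C (I ∪ J)) (C (J ∪ K)) - 2 * C (I ∪ J) - 2 * C (J ∪ K)))
  - (C I - C (I ∪ J ∪ K)) * (C J - C K) * C (I ∪ J)
  - (C I - C J) * (C (I ∪ J ∪ K) - C K) * C (J ∪ K)
  + (C I * C K - C (I ∪ J ∪ K) * C J) * (C (I ∪ J ∪ K) - C I + C J - C K)
  + (C I + C K) * (C (I ∪ J ∪ K) + C J)

/-!
Passing to the shifted generators `P i j = C_{ij} - C_i - C_j` and `F i j k = [C_{ij}, C_{jk}] / 2`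
removes the lower-order terms of (R4) and (R5). The Jacobi identity for `F i j k`, `P j l`, `P i j`
then yields, with `c i = C_i`, the alternating-sum relation
`F i j k * P i l - F i j l * P i k + F i k l * P i j = 2 * (c i * F j k l)`.

Twice `w_{i,j,k}` is a polynomial in `P`, `F` and `c` that is invariant under rotating `i, j, k`,
so it suffices that it commutes with `P i j` and with `P k l` for `l` outside the triple. In the
second bracket the central elements occur only as in the right-hand sides of the alternating-sum
relations; eliminating them leaves a sum of brackets that cancels by (R4) and (R5).
-/

section Ring

variable {ι R : Type*} [Ring R]

/-- The relations of the Racah algebra in the shifted generators `P i j = C_{ij} - C_i - C_j` and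
`F i j k = [C_{ij}, C_{jk}] / 2`, with `c i = C_i` central, over any index type. The shift absorbs
all lower-order terms of (R4) and (R5). Only the values of `P` and `F` at distinct indices carry
meaning, and `2 * F i j k` replaces the division by `2`. -/
structure RacahRelations (c : ι → R) (P : ι → ι → R) (F : ι → ι → ι → R) : Prop where
  P_symm (i j : ι) : P j i = P i j
  commute_c_c (i j : ι) : Commute (c i) (c j)
  commute_c_P (i j k : ι) : Commute (c i) (P j k)
  commute_P_P {i j k l : ι} : [i, j, k, l].Nodup → Commute (P i j) (P k l)
  lie_P_P {i j k : ι} : [i, j, k].Nodup → ⁅P i j, P j k⁆ = 2 * F i j k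
  F_rotate {i j k : ι} : [i, j, k].Nodup → F j k i = F i j k
  lie_P_F {i j k : ι} : [i, j, k].Nodup →
    ⁅P j k, F i j k⁆ = P i k * P j k - P j k * P i j + 2 * (c j * P i k - c k * P i j)
  lie_P_F_of_notMem {i j k l : ι} : [i, j, k, l].Nodup →
    ⁅P k l, F i j k⁆ = P i k * P j l - P i l * P j k
  lie_F_F {i j k l : ι} : [i, j, k, l].Nodup →
    ⁅F i j k, F j k l⁆ = -((F i j l + F i k l) * P j k)

namespace RacahRelations

variable {c : ι → R} {P : ι → ι → R} {F : ι → ι → ι → R} {i j k l : ι}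

lemma lie_P_P_second_third (h : RacahRelations c P F) (hn : [i, j, k].Nodup) :
    ⁅P j k, P i k⁆ = 2 * F i j k := by
  rw [← h.F_rotate hn, ← h.lie_P_P (by grind), h.P_symm i k]

lemma lie_P_P_third_first (h : RacahRelations c P F) (hn : [i, j, k].Nodup) :
    ⁅P i k, P i j⁆ = 2 * F i j k := by
  rw [← h.F_rotate hn, ← h.lie_P_P_second_third (by grind), h.P_symm i k, h.P_symm i j]

lemma lie_P_first_second_F (h : RacahRelations c P F) (hn : [i, j, k].Nodup) :
    ⁅P i j, F i j k⁆ = P j k * P i j - P i j * P i k + 2 * (c i * P j k - c j * P i k) := by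
  have hF : F i j k = F k i j := h.F_rotate (by grind)
  rw [hF, h.lie_P_F (by grind), h.P_symm j k, h.P_symm i k]

lemma lie_P_first_third_F (h : RacahRelations c P F) (hn : [i, j, k].Nodup) :
    ⁅P i k, F i j k⁆ = P i j * P i k - P i k * P j k + 2 * (c k * P i j - c i * P j k) := by
  rw [← h.F_rotate hn, ← h.P_symm i k, h.lie_P_F (by grind), h.P_symm i j]

lemma lie_P_first_F (h : RacahRelations c P F) (hn : [i, j, k, l].Nodup) :
    ⁅P i l, F i j k⁆ = P i j * P k l - P j l * P i k := by
  rw [← h.F_rotate (by grind), h.lie_P_F_of_notMem (by grind), h.P_symm i j, h.P_symm i k]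

lemma lie_P_second_F (h : RacahRelations c P F) (hn : [i, j, k, l].Nodup) :
    ⁅P j l, F i j k⁆ = P j k * P i l - P k l * P i j := by
  have hF : F i j k = F k i j := h.F_rotate (by grind)
  rw [hF, h.lie_P_F_of_notMem (by grind), h.P_symm j k]

variable [IsAddTorsionFree R]

lemma F_reverse (h : RacahRelations c P F) (hn : [i, j, k].Nodup) : F k j i = -F i j k := by
  rw [← nsmul_right_inj two_ne_zero]
  have hijk := h.lie_P_P hn
  have hkji := h.lie_P_P (i := k) (j := j) (k := i) (by grind)
  rw [h.P_symm j k, h.P_symm i j] at hkji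
  linear_combination (norm := noncomm_ring [Ring.lie_def]) -hijk - hkji

lemma F_swap (h : RacahRelations c P F) (hn : [i, j, k].Nodup) : F j i k = -F i j k := by
  rw [h.F_reverse (i := k) (by grind), ← h.F_rotate (i := k) (by grind)]

lemma commute_F_of_commute_P (h : RacahRelations c P F) (hn : [i, j, k].Nodup) {x : R}
    (hij : Commute x (P i j)) (hjk : Commute x (P j k)) : Commute x (F i j k) := by
  have hlie : Commute x ⁅P i j, P j k⁆ := (hij.mul_right hjk).sub_right (hjk.mul_right hij)
  rw [h.lie_P_P hn] at hlie
  rw [Commute, SemiconjBy, ← nsmul_right_inj two_ne_zero]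
  linear_combination (norm := noncomm_ring) hlie.eq

lemma commute_c_F (h : RacahRelations c P F) (m : ι) (hn : [i, j, k].Nodup) :
    Commute (c m) (F i j k) :=
  h.commute_F_of_commute_P hn (h.commute_c_P ..) (h.commute_c_P ..)

lemma lie_F_F_of_notMem (h : RacahRelations c P F) (hn : [i, j, k, l].Nodup) :
    ⁅F i j k, F i j l⁆ = (F i k l + F j k l) * P i j := by
  have hF : F i j k = F k i j := h.F_rotate (by grind)
  rw [hF, h.lie_F_F (by grind), h.F_swap (i := i) (by grind), h.F_swap (i := j) (by grind)]
  noncomm_ring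

lemma F_mul_P_alternating_sum (h : RacahRelations c P F) (hn : [i, j, k, l].Nodup) :
    F i j k * P i l - F i j l * P i k + F i k l * P i j = 2 * (c i * F j k l) := by
  rw [← nsmul_right_inj two_ne_zero]
  have hijk : [i, j, k].Nodup := by grind
  have hijl : [i, j, l].Nodup := by grind
  have hjkl : [j, k, l].Nodup := by grind
  have lie_ij_jl := h.lie_P_P hijl
  have lie_jl_jk := h.lie_P_P_third_first hjkl
  have comm_ik_jl : Commute (P i k) (P j l) := h.commute_P_P (by grind)
  have comm_ij_kl : Commute (P i j) (P k l) := h.commute_P_P hn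
  have bracket₁ : ⁅⁅F i j k, P j l⁆, P i j⁆ = 2 * (F i j k * P i l - P j k * F i j l) := by
    have lie_jl_F := h.lie_P_second_F hn
    linear_combination (norm := noncomm_ring [Ring.lie_def])
      P i j * lie_jl_F - lie_jl_F * P i j - comm_ij_kl.eq * P i j
        + h.lie_P_P hijk * P i l - P j k * h.lie_P_P_third_first hijl
  have bracket₂ : ⁅⁅P j l, P i j⁆, F i j k⁆ = 2 * ((F i k l + F j k l) * P i j) := by
    linear_combination (norm := noncomm_ring [Ring.lie_def])
      F i j k * lie_ij_jl - lie_ij_jl * F i j k + 2 * h.lie_F_F_of_notMem hn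
  have bracket₃ : ⁅⁅P i j, F i j k⁆, P j l⁆ =
      2 * (P j k * F i j l - F j k l * P i j - F i j l * P i k - 2 * (c i * F j k l)) := by
    have lie_ij_F := h.lie_P_first_second_F hijk
    linear_combination (norm := noncomm_ring [Ring.lie_def])
      lie_ij_F * P j l - P j l * lie_ij_F
        + P j k * lie_ij_jl - lie_jl_jk * P i j - lie_ij_jl * P i k - P i j * comm_ik_jl.eq
        - 2 * (c i * lie_jl_jk) + 2 * ((h.commute_c_P i j l).eq * P j k)
        - 2 * (c j * comm_ik_jl.eq) - 2 * ((h.commute_c_P j j l).eq * P i k)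
  have jacobi : ⁅⁅F i j k, P j l⁆, P i j⁆ + ⁅⁅P j l, P i j⁆, F i j k⁆
      + ⁅⁅P i j, F i j k⁆, P j l⁆ = 0 := by
    noncomm_ring [Ring.lie_def]
  linear_combination (norm := noncomm_ring) jacobi - bracket₁ - bracket₂ - bracket₃

end RacahRelations

/-- Twice the element `w_{i,j,k}` in the shifted generators. It is `2 F²` plus an ordered form of
the determinant of the matrix with diagonal `2 c i, 2 c j, 2 c k` and off-diagonal entries
`P i j, P i k, P j k`, together with quadratic corrections. -/
def racahCasimir (c : ι → R) (P : ι → ι → R) (F : ι → ι → ι → R) (i j k : ι) : R :=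
  2 * F i j k ^ 2 + (P i j * P i k * P j k + P j k * P i k * P i j)
    - (P i k * (P i j + P j k) + (P i j + P j k) * P i k) - 4 * (c j * P i k)
    - 2 * (c i * P j k ^ 2 + c j * P i k ^ 2 + c k * P i j ^ 2) + 8 * (c i * c j * c k)

lemma commute_racahCasimir {c : ι → R} {P : ι → ι → R} {F : ι → ι → ι → R} {i j k : ι} {x : R}
    (hc : ∀ i, Commute (c i) x) (hij : Commute (P i j) x) (hik : Commute (P i k) x)
    (hjk : Commute (P j k) x) (hF : Commute (F i j k) x) :
    Commute (racahCasimir c P F i j k) x := by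
  unfold racahCasimir
  repeat' first
    | assumption
    | exact hc _
    | exact Commute.ofNat_left _ x
    | apply Commute.add_left
    | apply Commute.sub_left
    | apply Commute.mul_left
    | apply Commute.pow_left

namespace RacahRelations

variable {c : ι → R} {P : ι → ι → R} {F : ι → ι → ι → R} {i j k l m : ι}

lemma commute_add_P_F (h : RacahRelations c P F) (hn : [i, j, k].Nodup) :
    Commute (P i j + P i k + P j k) (F i j k) := by
  rw [commute_iff_lie_eq]
  linear_combination (norm := noncomm_ring [Ring.lie_def])
    h.lie_P_first_second_F hn + h.lie_P_first_third_F hn + h.lie_P_F hn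

lemma racahCasimir_rotate (h : RacahRelations c P F) (hn : [i, j, k].Nodup) :
    racahCasimir c P F j k i = racahCasimir c P F i j k := by
  have lie_ik_ij := h.lie_P_P_third_first hn
  have comm_c : c j * c k * c i = c i * c j * c k := by
    rw [((h.commute_c_c j i).mul_left (h.commute_c_c k i)).eq, mul_assoc]
  rw [racahCasimir, racahCasimir, h.F_rotate hn, h.P_symm i j, h.P_symm i k]
  linear_combination (norm := noncomm_ring [Ring.lie_def])
    lie_ik_ij * P j k - P j k * lie_ik_ij - 2 * h.lie_P_F hn
      + h.lie_P_P_second_third hn - h.lie_P_P hn + 8 * comm_c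

lemma lie_lie_P_F_P (h : RacahRelations c P F) (hn : [i, j, k].Nodup) :
    ⁅⁅P i j, F i j k⁆, P j k⁆ =
      2 * (P j k * F i j k + P i j * F i j k - F i j k * P i k) + 4 * (c j * F i j k) := by
  have lie_ij_jk := h.lie_P_P hn
  have lie_jk_ik := h.lie_P_P_second_third hn
  rw [h.lie_P_first_second_F hn]
  linear_combination (norm := noncomm_ring [Ring.lie_def])
    P j k * lie_ij_jk + P i j * lie_jk_ik - lie_ij_jk * P i k + 2 * (c j * lie_jk_ik)
    + 2 * ((h.commute_c_P i j k).eq * P j k) - 2 * ((h.commute_c_P j j k).eq * P i k)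

lemma lie_racahCasimir_P_of_notMem (h : RacahRelations c P F) (hn : [i, j, k, l].Nodup) :
    ⁅racahCasimir c P F i j k, P k l⁆ =
      2 * (F i j k * (P i l * P j k - P i k * P j l) + (P i l * P j k - P i k * P j l) * F i j k)
        + 2 * (P i j * F i k l * P j k + P i j * P i k * F j k l
            + F j k l * P i k * P i j + P j k * F i k l * P i j)
        - 2 * (F i k l * (P i j + P j k) + (P i j + P j k) * F i k l)
        - 2 * (P i k * F j k l + F j k l * P i k) - 8 * (c j * F i k l)
        - 4 * (c i * (F j k l * P j k + P j k * F j k l))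
        - 4 * (c j * (F i k l * P i k + P i k * F i k l)) := by
  have lie_kl_F := h.lie_P_F_of_notMem hn
  have comm_ij_kl := (h.commute_P_P hn).eq
  have lie_ik_kl := h.lie_P_P (i := i) (j := k) (k := l) (by grind)
  have lie_jk_kl := h.lie_P_P (i := j) (j := k) (k := l) (by grind)
  have comm_ci := h.commute_c_P i k l
  have comm_cj := h.commute_c_P j k l
  have comm_ck := h.commute_c_P k k l
  rw [racahCasimir]
  linear_combination (norm := noncomm_ring [Ring.lie_def])
    - 2 * (F i j k * lie_kl_F + lie_kl_F * F i j k)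
    + P i j * P i k * lie_jk_kl + P i j * lie_ik_kl * P j k + comm_ij_kl * P i k * P j k
    + P j k * P i k * comm_ij_kl + P j k * lie_ik_kl * P i j + lie_jk_kl * P i k * P i j
    - lie_ik_kl * (P i j + P j k) - P i k * (comm_ij_kl + lie_jk_kl)
    - (P i j + P j k) * lie_ik_kl - (comm_ij_kl + lie_jk_kl) * P i k
    - 4 * (c j * lie_ik_kl) - 4 * (comm_cj.eq * P i k)
    - 2 * (c i * (lie_jk_kl * P j k + P j k * lie_jk_kl) + comm_ci.eq * P j k ^ 2)
    - 2 * (c j * (lie_ik_kl * P i k + P i k * lie_ik_kl) + comm_cj.eq * P i k ^ 2)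
    - 2 * (c k * (comm_ij_kl * P i j + P i j * comm_ij_kl) + comm_ck.eq * P i j ^ 2)
    + 8 * ((comm_ci.mul_left comm_cj).mul_left comm_ck).eq

variable [IsAddTorsionFree R]

lemma lie_racahCasimir_P (h : RacahRelations c P F) (hn : [i, j, k].Nodup) :
    ⁅racahCasimir c P F i j k, P i j⁆ =
      2 * ⁅⁅P i j, F i j k⁆, P j k⁆ - 2 * (F i j k * (P i j + P j k) + (P i j + P j k) * F i j k)
        + 2 * (P i k * F i j k + F i j k * P i k) - 8 * (c j * F i j k) := by
  have lie_ij_jk := h.lie_P_P hn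
  have lie_ik_ij := h.lie_P_P_third_first hn
  have lie_ij_F := h.lie_P_first_second_F hn
  have comm_ci := h.commute_c_P i i j
  have comm_cj := h.commute_c_P j i j
  have comm_ck := h.commute_c_P k i j
  rw [racahCasimir]
  linear_combination (norm := noncomm_ring [Ring.lie_def])
    - 2 * (F i j k * lie_ij_F + lie_ij_F * F i j k)
    - P i j * P i k * lie_ij_jk + P i j * lie_ik_ij * P j k + P j k * lie_ik_ij * P i j
    - lie_ij_jk * P i k * P i j
    - lie_ik_ij * (P i j + P j k) + P i k * lie_ij_jk + lie_ij_jk * P i k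
    - (P i j + P j k) * lie_ik_ij
    - 4 * (c j * lie_ik_ij) - 2 * (c j * (P i k * lie_ik_ij + lie_ik_ij * P i k))
    + 2 * (c i * (P j k * lie_ij_jk + lie_ij_jk * P j k))
    + 2 * (F i j k * lie_ij_jk) - 2 * (F i j k * lie_ik_ij)
    + 4 * ((h.commute_c_F i hn).eq * P j k) - 4 * ((h.commute_c_F j hn).eq * P i k)
    - 4 * (comm_cj.eq * P i k) - 2 * (comm_ci.eq * P j k ^ 2)
    - 2 * (comm_cj.eq * P i k ^ 2) - 2 * (comm_ck.eq * P i j ^ 2)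
    + 8 * ((comm_ci.mul_left comm_cj).mul_left comm_ck).eq

lemma commute_racahCasimir_P_first_second (h : RacahRelations c P F) (hn : [i, j, k].Nodup) :
    Commute (racahCasimir c P F i j k) (P i j) := by
  rw [commute_iff_lie_eq, h.lie_racahCasimir_P hn, h.lie_lie_P_F_P hn]
  linear_combination (norm := noncomm_ring) 2 * (h.commute_add_P_F hn).eq

-- The alternating-sum relations at `i` and at `j` eliminate the terms in `c i` and `c j`.
lemma lie_racahCasimir_P_eq_add_lie (h : RacahRelations c P F) (hn : [i, j, k, l].Nodup) :
    ⁅racahCasimir c P F i j k, P k l⁆ =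
      2 * (P i k * ⁅F i j k, P j l⁆ - P j k * ⁅F i j k, P i l⁆)
        + 2 * (⁅P i j, F i k l⁆ * P j k + P i k * ⁅P i j, F j k l⁆ + 2 * ⁅F j k l, F i j k⁆)
        + 2 * (⁅P j k, F i j l⁆ * P i k - ⁅P i k, F i j l⁆ * P j k)
        - 2 * (F i k l * (P i j + P j k) + (P i j + P j k) * F i k l)
        - 2 * (P i k * F j k l + F j k l * P i k)
        - 4 * (F j k l * P i j + F i j l * P j k - F i j k * P j l) := by
  have lie_ik_ij := h.lie_P_P_third_first (i := i) (j := j) (k := k) (by grind)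
  have comm_ik_jl : Commute (P i k) (P j l) := h.commute_P_P (by grind)
  have comm_il_jk : Commute (P i l) (P j k) := h.commute_P_P (by grind)
  have plucker_i := h.F_mul_P_alternating_sum hn
  have plucker_j := h.F_mul_P_alternating_sum (i := j) (j := i) (k := k) (l := l) (by grind)
  rw [h.F_swap (i := i) (j := j) (k := k) (by grind),
    h.F_swap (i := i) (j := j) (k := l) (by grind), h.P_symm i j] at plucker_j
  rw [h.lie_racahCasimir_P_of_notMem hn]
  linear_combination (norm := noncomm_ring [Ring.lie_def])
    2 * (plucker_i * P j k + P j k * plucker_i) + 2 * (plucker_j * P i k + P i k * plucker_j)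
    + 4 * plucker_j
    + 2 * (F j k l * lie_ik_ij - lie_ik_ij * F j k l)
    + 2 * (comm_il_jk.eq * F i j k) - 2 * (F i j k * comm_ik_jl.eq)
    - 4 * ((h.commute_c_P i j k).eq * F j k l + (h.commute_c_P j i k).eq * F i k l)

lemma lie_racahCasimir_P_eq_sum_lie_P_F (h : RacahRelations c P F) (hn : [i, j, k, l].Nodup) :
    ⁅racahCasimir c P F i j k, P k l⁆ =
      4 * ⁅P i j, F j k l⁆ + 2 * ⁅P i j, F i k l⁆
        + 2 * ⁅P i k, F j k l⁆ - 2 * ⁅P j k, F i k l⁆ := by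
  have lie_il_Fijk := h.lie_P_first_F hn
  have lie_jl_Fijk := h.lie_P_second_F hn
  have lie_ik_Fijl := h.lie_P_first_F (i := i) (j := j) (k := l) (l := k) (by grind)
  have lie_jk_Fijl := h.lie_P_second_F (i := i) (j := j) (k := l) (l := k) (by grind)
  have lie_ij_Fikl := h.lie_P_first_F (i := i) (j := k) (k := l) (l := j) (by grind)
  have lie_ij_Fjkl := h.lie_P_first_F (i := j) (j := k) (k := l) (l := i) (by grind)
  simp only [h.P_symm i j, h.P_symm i k, h.P_symm i l, h.P_symm j k, h.P_symm j l, h.P_symm k l]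
    at lie_ik_Fijl lie_jk_Fijl lie_ij_Fikl lie_ij_Fjkl
  have hijk : [i, j, k].Nodup := by grind
  have hikl : [i, k, l].Nodup := by grind
  have hjkl : [j, k, l].Nodup := by grind
  have comm_ij_kl : Commute (P i j) (P k l) := h.commute_P_P hn
  have comm_ik_jl : Commute (P i k) (P j l) := h.commute_P_P (by grind)
  rw [h.lie_racahCasimir_P_eq_add_lie hn]
  linear_combination (norm := noncomm_ring [Ring.lie_def])
    2 * (P j k * lie_il_Fijk - P i k * lie_jl_Fijk)
    + 2 * (lie_ij_Fikl * P j k + P i k * lie_ij_Fjkl - 2 * h.lie_F_F hn)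
    + 2 * (lie_jk_Fijl * P i k - lie_ik_Fijl * P j k)
    + 2 * (P i k * h.lie_P_P_third_first hjkl - h.lie_P_P_second_third hijk * P j l)
    + 2 * (P i j * h.lie_P_P hjkl - h.lie_P_P hijk * P k l)
    + 2 * (P i j * h.lie_P_P hikl + h.lie_P_P_third_first hijk * P k l)
    + 2 * (comm_ij_kl.eq * P i k - P i k * comm_ij_kl.eq)
    + 2 * (P j k * comm_ik_jl.eq - P i k * comm_ik_jl.eq - comm_ik_jl.eq * P i k)

lemma commute_racahCasimir_P_third_notMem (h : RacahRelations c P F) (hn : [i, j, k, l].Nodup) :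
    Commute (racahCasimir c P F i j k) (P k l) := by
  have lie_ij_Fikl := h.lie_P_first_F (i := i) (j := k) (k := l) (l := j) (by grind)
  have lie_jk_Fikl := h.lie_P_second_F (i := i) (j := k) (k := l) (l := j) (by grind)
  have lie_ij_Fjkl := h.lie_P_first_F (i := j) (j := k) (k := l) (l := i) (by grind)
  have lie_ik_Fjkl := h.lie_P_second_F (i := j) (j := k) (k := l) (l := i) (by grind)
  have comm_ik_jl : Commute (P i k) (P j l) := h.commute_P_P (by grind)
  have comm_il_jk : Commute (P i l) (P j k) := h.commute_P_P (by grind)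
  simp only [h.P_symm i j, h.P_symm i k, h.P_symm i l, h.P_symm j k, h.P_symm j l, ← comm_ik_jl.eq,
    comm_il_jk.eq] at lie_ij_Fikl lie_jk_Fikl lie_ij_Fjkl lie_ik_Fjkl
  rw [commute_iff_lie_eq, h.lie_racahCasimir_P_eq_sum_lie_P_F hn, lie_ij_Fikl, lie_jk_Fikl,
    lie_ij_Fjkl, lie_ik_Fjkl]
  noncomm_ring

lemma commute_racahCasimir_P_third (h : RacahRelations c P F) (hn : [i, j, k].Nodup)
    (hkl : k ≠ l) : Commute (racahCasimir c P F i j k) (P k l) := by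
  rcases eq_or_ne l i with rfl | hli
  · rw [h.racahCasimir_rotate (i := k) (j := l) (k := j) (by grind)]
    exact h.commute_racahCasimir_P_first_second (by grind)
  rcases eq_or_ne l j with rfl | hlj
  · rw [← h.racahCasimir_rotate hn, h.P_symm]
    exact h.commute_racahCasimir_P_first_second (by grind)
  exact h.commute_racahCasimir_P_third_notMem (by grind)

lemma commute_racahCasimir_P_of_mem (h : RacahRelations c P F) (hn : [i, j, k].Nodup)
    (hl : l ∈ [i, j, k]) (hlm : l ≠ m) : Commute (racahCasimir c P F i j k) (P l m) := by
  simp only [List.mem_cons, List.not_mem_nil, or_false] at hl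
  rcases hl with rfl | rfl | rfl
  · rw [← h.racahCasimir_rotate hn]
    exact h.commute_racahCasimir_P_third (by grind) hlm
  · rw [h.racahCasimir_rotate (i := k) (j := i) (k := l) (by grind)]
    exact h.commute_racahCasimir_P_third (by grind) hlm
  · exact h.commute_racahCasimir_P_third hn hlm

lemma commute_racahCasimir_c (h : RacahRelations c P F) (hn : [i, j, k].Nodup) (m : ι) :
    Commute (racahCasimir c P F i j k) (c m) :=
  commute_racahCasimir (h.commute_c_c · m) (h.commute_c_P ..).symm (h.commute_c_P ..).symm
    (h.commute_c_P ..).symm (h.commute_c_F m hn).symm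

theorem commute_racahCasimir_P (h : RacahRelations c P F) (hn : [i, j, k].Nodup) (hlm : l ≠ m) :
    Commute (racahCasimir c P F i j k) (P l m) := by
  by_cases hl : l ∈ [i, j, k]
  · exact h.commute_racahCasimir_P_of_mem hn hl hlm
  by_cases hm : m ∈ [i, j, k]
  · rw [h.P_symm]
    exact h.commute_racahCasimir_P_of_mem hn hm hlm.symm
  have comm_ij : Commute (P i j) (P l m) := h.commute_P_P (by grind)
  have comm_ik : Commute (P i k) (P l m) := h.commute_P_P (by grind)
  have comm_jk : Commute (P j k) (P l m) := h.commute_P_P (by grind)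
  exact commute_racahCasimir (h.commute_c_P · l m) comm_ij comm_ik comm_jk
    (h.commute_F_of_commute_P hn comm_ij.symm comm_jk.symm).symm

end RacahRelations

/-- The shifted generator `P i j = C_{ij} - C_i - C_j`. -/
def shiftedPair (C : Finset (Fin 4) → R) (i j : Fin 4) : R := C {i, j} - C {i} - C {j}

lemma lie_shiftedPair {C : Finset (Fin 4) → R} {x : R} (hx : ∀ m, Commute (C {m}) x)
    (i j : Fin 4) : ⁅shiftedPair C i j, x⁆ = cm (C {i, j}) x := by
  rw [shiftedPair, cm]
  linear_combination (norm := noncomm_ring [Ring.lie_def]) -(hx i).eq - (hx j).eq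

variable {C : Finset (Fin 4) → R} {i j k l : Fin 4}

lemma RelR3.singletons (h3 : RelR3 C) (hn : [i, j, k].Nodup) :
    cm (C {i, j}) (C {j, k}) = cm (C {j, k}) (C {i, k}) ∧
    cm (C {j, k}) (cm (C {i, j}) (C {j, k})) =
      2 * (C {i, k} * C {j, k}) - 2 * (C {j, k} * C {i, j})
        + 2 * ((C {j} - C {k}) * (C {i, j, k} - C {i})) := by
  obtain ⟨hij, hik, hjk⟩ : i ≠ j ∧ i ≠ k ∧ j ≠ k := by grind
  obtain ⟨rotate, -, double⟩ := h3 {i} {j} {k} (singleton_nonempty i) (singleton_nonempty j)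
    (singleton_nonempty k) (disjoint_singleton.mpr hij) (disjoint_singleton.mpr hjk)
    (disjoint_singleton.mpr hik)
  simp only [singleton_union, insert_union] at double
  exact ⟨rotate, double⟩

namespace RelR1

lemma commute (h1 : RelR1 C) {I J : Finset (Fin 4)} (hIJ : I ∩ J = ∅ ∨ I ⊆ J ∨ J ⊆ I) :
    Commute (C I) (C J) :=
  sub_eq_zero.mp (h1 I J hIJ)

lemma commute_singleton (h1 : RelR1 C) (i : Fin 4) (J : Finset (Fin 4)) :
    Commute (C {i}) (C J) := by
  refine h1.commute ?_
  by_cases hi : i ∈ J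
  · exact .inr (.inl (singleton_subset_iff.mpr hi))
  · exact .inl (singleton_inter_of_notMem hi)

lemma commute_singleton_shiftedPair (h1 : RelR1 C) (m i j : Fin 4) :
    Commute (C {m}) (shiftedPair C i j) :=
  ((h1.commute_singleton m _).sub_right (h1.commute_singleton m _)).sub_right
    (h1.commute_singleton m _)

lemma commute_shiftedPair (h1 : RelR1 C) (hn : [i, j, k, l].Nodup) :
    Commute (shiftedPair C i j) (shiftedPair C k l) := by
  have hij : Commute (C {i, j}) (shiftedPair C k l) :=
    ((h1.commute (.inl (by grind))).sub_right (h1.commute_singleton k _).symm).sub_right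
      (h1.commute_singleton l _).symm
  exact (hij.sub_left (h1.commute_singleton_shiftedPair i k l)).sub_left
    (h1.commute_singleton_shiftedPair j k l)

end RelR1

end Ring

section RacahAlgebra

/-- The element `F i j k = [C_{ij}, C_{jk}] / 2`. -/
def halfCommutator (C : Finset (Fin 4) → A) (i j k : Fin 4) : A :=
  ((1 : ℂ) / 2) • cm (C {i, j}) (C {j, k})

variable {C : Finset (Fin 4) → A} {i j k l : Fin 4}

lemma two_mul_half_smul (x : A) : 2 * (((1 : ℂ) / 2) • x) = x := by
  rw [two_mul]
  module

lemma two_mul_halfCommutator (C : Finset (Fin 4) → A) (i j k : Fin 4) :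
    2 * halfCommutator C i j k = cm (C {i, j}) (C {j, k}) :=
  two_mul_half_smul _

lemma RelR1.commute_singleton_halfCommutator (h1 : RelR1 C) (m i j k : Fin 4) :
    Commute (C {m}) (halfCommutator C i j k) :=
  (((h1.commute_singleton m _).mul_right (h1.commute_singleton m _)).sub_right
    ((h1.commute_singleton m _).mul_right (h1.commute_singleton m _))).smul_right _

lemma RelR2.triple_eq (h2 : RelR2 C) (hn : [i, j, k].Nodup) :
    C {i, j, k} = shiftedPair C i j + shiftedPair C i k + shiftedPair C j k
      + C {i} + C {j} + C {k} := by
  obtain ⟨hij, hik, hjk⟩ : i ≠ j ∧ i ≠ k ∧ j ≠ k := by grind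
  have sdiff_i : ({i, j, k} \ {i} : Finset (Fin 4)) = {j, k} := by grind
  have sdiff_j : ({i, j, k} \ {j} : Finset (Fin 4)) = {i, k} := by grind
  have sdiff_k : ({i, j, k} \ {k} : Finset (Fin 4)) = {i, j} := by grind
  have hsum (f : Fin 4 → A) : ∑ m ∈ {i, j, k}, f m = f i + f j + f k := by
    rw [sum_insert (by grind), sum_pair hjk, add_assoc]
  have hcard : #({i, j, k} : Finset (Fin 4)) = 3 := card_eq_three.mpr ⟨i, j, k, by grind⟩
  rw [h2 _ hcard.ge, hcard, hsum, hsum, sdiff_i, sdiff_j, sdiff_k, sum_pair hjk,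
    sum_pair hik, sum_pair hij, pair_comm j i, pair_comm k i, pair_comm k j]
  simp only [shiftedPair]
  push_cast
  module

lemma RelR1.lie_shiftedPair_shiftedPair (h1 : RelR1 C) (i j k : Fin 4) :
    ⁅shiftedPair C i j, shiftedPair C j k⁆ = 2 * halfCommutator C i j k := by
  rw [lie_shiftedPair (h1.commute_singleton_shiftedPair · j k), two_mul_halfCommutator,
    shiftedPair, cm, cm]
  linear_combination (norm := noncomm_ring)
    (h1.commute_singleton j {i, j}).eq + (h1.commute_singleton k {i, j}).eq

lemma lie_shiftedPair_halfCommutator (h1 : RelR1 C) (h2 : RelR2 C) (h3 : RelR3 C)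
    (hn : [i, j, k].Nodup) :
    ⁅shiftedPair C j k, halfCommutator C i j k⁆ =
      shiftedPair C i k * shiftedPair C j k - shiftedPair C j k * shiftedPair C i j
        + 2 * (C {j} * shiftedPair C i k - C {k} * shiftedPair C i j) := by
  have := IsAddTorsionFree.of_isTorsionFree ℂ A
  have hc (m : Fin 4) (J : Finset (Fin 4)) := (h1.commute_singleton m J).eq
  have double := (h3.singletons hn).2
  rw [h2.triple_eq hn, ← two_mul_halfCommutator] at double
  rw [lie_shiftedPair (h1.commute_singleton_halfCommutator · i j k),
    ← nsmul_right_inj two_ne_zero]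
  simp only [shiftedPair, cm] at double ⊢
  linear_combination (norm := noncomm_ring) double
    - 2 * (hc j {i, k} + hc k {i, k} - hc i {j, k} - hc j {j, k} + hc i {j} + hc i {k} + hc k {j})

lemma lie_shiftedPair_halfCommutator_of_notMem (h1 : RelR1 C) (h4 : RelR4 C)
    (hn : [i, j, k, l].Nodup) :
    ⁅shiftedPair C k l, halfCommutator C i j k⁆ =
      shiftedPair C i k * shiftedPair C j l - shiftedPair C i l * shiftedPair C j k := by
  have hc (m : Fin 4) (J : Finset (Fin 4)) := (h1.commute_singleton m J).eq
  have double := h4 i j k l (by grind) (by grind) (by grind) (by grind) (by grind) (by grind)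
  have half : ((1 : ℂ) / 2) • cm (C {k, l}) (cm (C {i, j}) (C {j, k})) =
      cm (C {k, l}) (halfCommutator C i j k) := by
    simp only [halfCommutator, cm, mul_smul_comm, smul_mul_assoc, ← smul_sub]
  rw [lie_shiftedPair (h1.commute_singleton_halfCommutator · i j k), ← half, double]
  simp only [shiftedPair]
  linear_combination (norm := noncomm_ring)
    - hc j {i, k} - hc l {i, k} + hc j {i, l} + hc k {i, l} - hc k {j} - hc k {l} + hc l {j}

lemma RelR5.lie_halfCommutator (h5 : RelR5 C) (hn : [i, j, k, l].Nodup) :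
    ⁅halfCommutator C i j k, halfCommutator C j k l⁆ =
      -((halfCommutator C i j l + halfCommutator C i k l) * shiftedPair C j k) := by
  have := IsAddTorsionFree.of_isTorsionFree ℂ A
  have hR5 := congrArg (2 * ·)
    (h5 i j k l (by grind) (by grind) (by grind) (by grind) (by grind) (by grind))
  simp only [two_mul_half_smul, ← two_mul_halfCommutator] at hR5
  rw [← nsmul_right_inj four_ne_zero]
  simp only [cm, shiftedPair] at hR5 ⊢
  linear_combination (norm := noncomm_ring [Ring.lie_def]) hR5

theorem racahRelations_shiftedPair (h1 : RelR1 C) (h2 : RelR2 C) (h3 : RelR3 C) (h4 : RelR4 C)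
    (h5 : RelR5 C) :
    RacahRelations (fun i => C {i}) (shiftedPair C) (halfCommutator C) where
  P_symm i j := by rw [shiftedPair, shiftedPair, pair_comm, sub_right_comm]
  commute_c_c i j := h1.commute_singleton i {j}
  commute_c_P := h1.commute_singleton_shiftedPair
  commute_P_P hn := h1.commute_shiftedPair hn
  lie_P_P _ := h1.lie_shiftedPair_shiftedPair ..
  F_rotate {i j k} hn := by
    rw [halfCommutator, halfCommutator, pair_comm k i, (h3.singletons hn).1]
  lie_P_F hn := lie_shiftedPair_halfCommutator h1 h2 h3 hn
  lie_P_F_of_notMem hn := lie_shiftedPair_halfCommutator_of_notMem h1 h4 hn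
  lie_F_F hn := h5.lie_halfCommutator hn

lemma two_mul_wElt (h1 : RelR1 C) (h2 : RelR2 C) (hn : [i, j, k].Nodup) :
    2 * wElt C {i} {j} {k} =
      racahCasimir (fun i => C {i}) (shiftedPair C) (halfCommutator C) i j k := by
  have pair_ik : C {i, k} = C {i, j, k} - C {i, j} - C {j, k} + C {i} + C {j} + C {k} := by
    rw [h2.triple_eq hn, shiftedPair, shiftedPair, shiftedPair]
    abel
  have sq_cm : 2 * ((1 : ℂ) / 4) • cm (C {i, j}) (C {j, k}) ^ 2 =
      2 * halfCommutator C i j k ^ 2 := by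
    rw [← two_mul_halfCommutator]
    simp only [two_mul, pow_two, mul_add, add_mul]
    module
  have comm_c (p q : Fin 4) := h1.commute_singleton p {q}
  have comm_pair (m p q : Fin 4) := (h1.commute_singleton m {p, q}).symm
  have comm_triple (m : Fin 4) := (h1.commute_singleton m {i, j, k}).symm
  have comm_ij : Commute (C {i, j}) (C {i, j, k}) := h1.commute (.inr (.inl (by grind)))
  have comm_jk : Commute (C {j, k}) (C {i, j, k}) := h1.commute (.inr (.inl (by grind)))
  simp only [wElt, racahCasimir, singleton_union, insert_union, mul_add (2 : A),
    mul_sub (2 : A), sq_cm,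
    two_mul_half_smul, acm, shiftedPair, pair_ik]
  simp only [pow_two, mul_add, add_mul, mul_sub, sub_mul, mul_assoc,
    (comm_c _ _).eq, (comm_c _ _).left_comm, (comm_pair _ _ _).eq, (comm_pair _ _ _).left_comm,
    (comm_triple _).eq, (comm_triple _).left_comm, comm_ij.eq, comm_jk.eq]
  noncomm_ring

lemma RelR2.commute_of_commute_pair {x : A} (h2 : RelR2 C) (hsingle : ∀ i, Commute x (C {i}))
    (hpair : ∀ i j, i ≠ j → Commute x (C {i, j})) {I : Finset (Fin 4)} (hI : I.Nonempty) :
    Commute x (C I) := by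
  obtain hcard | hcard | hcard : #I = 1 ∨ #I = 2 ∨ 3 ≤ #I := by
    have := hI.card_pos
    omega
  · obtain ⟨i, rfl⟩ := card_eq_one.mp hcard
    exact hsingle i
  · obtain ⟨i, j, hij, rfl⟩ := card_eq_two.mp hcard
    exact hpair i j hij
  · rw [h2 I hcard]
    refine .sub_right (.smul_right (.sum_right _ _ _ fun i _ => .sum_right _ _ _ fun j hj => ?_) _)
      (.smul_right (.sum_right _ _ _ fun i _ => hsingle i) _)
    exact hpair i j (by grind)

theorem stmt6_general (h1 : RelR1 C) (h2 : RelR2 C) (h3 : RelR3 C) (h4 : RelR4 C) (h5 : RelR5 C)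
    (hn : [i, j, k].Nodup) {I : Finset (Fin 4)} (hI : I.Nonempty) :
    cm (wElt C {i} {j} {k}) (C I) = 0 := by
  have := IsAddTorsionFree.of_isTorsionFree ℂ A
  have hC := racahRelations_shiftedPair h1 h2 h3 h4 h5
  have half_casimir : wElt C {i} {j} {k} =
      ((1 : ℂ) / 2) • racahCasimir (fun i => C {i}) (shiftedPair C) (halfCommutator C) i j k := by
    rw [← two_mul_wElt h1 h2 hn, two_mul]
    module
  have comm_single (m : Fin 4) : Commute (wElt C {i} {j} {k}) (C {m}) :=
    half_casimir ▸ (hC.commute_racahCasimir_c hn m).smul_left _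
  have comm_pair (l m : Fin 4) (hlm : l ≠ m) : Commute (wElt C {i} {j} {k}) (C {l, m}) := by
    have comm_P : Commute (wElt C {i} {j} {k}) (shiftedPair C l m) :=
      half_casimir ▸ (hC.commute_racahCasimir_P hn hlm).smul_left _
    simpa only [shiftedPair, sub_add_cancel]
      using (comm_P.add_right (comm_single m)).add_right (comm_single l)
  exact sub_eq_zero.mpr (h2.commute_of_commute_pair comm_single comm_pair hI)

end RacahAlgebra

/-- In `R(4)`, the element `w_{1,2,3}` is central: it commutes with `C_I` for every
nonempty `I ⊆ {1,2,3,4}` (indices `1,2,3,4` are rendered as `0,1,2,3 : Fin 4`). -/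
theorem stmt6 (C : Finset (Fin 4) → A) (hC0 : C ∅ = 0)
    (h1 : RelR1 C) (h2 : RelR2 C) (h3 : RelR3 C) (h4 : RelR4 C) (h5 : RelR5 C) :
    ∀ I : Finset (Fin 4), I.Nonempty → cm (wElt C {0} {1} {2}) (C I) = 0 :=
  fun _ hI => stmt6_general h1 h2 h3 h4 h5 (by decide) hI
end
end

section
/- In R(4) the following equalities hold: w_{12,3,4} − w_{1,3,4} − w_{2,3,4} = w_{1,23,4} − w_{1,2,4} − w_{1,3,4} = w_{1,2,34} − w_{1,2,3} − w_{1,2,4}. (The common value is twice the central element x_{1234}.) -/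
noncomputable section

open Finset

variable {A : Type*} [Ring A] [Algebra ℂ A]

/-!
Put `p_{IJ} = C_{IJ} - C_I - C_J` and `f_{IJK} = [p_{IJ}, p_{JK}] / 2`. By (R2) the `p_{IJ}` are
additive in each index, and (R3) makes `f` alternating and rewrites `w_{I,J,K}` as a symmetric
function of `I, J, K`. Each of the three expressions is therefore a value of the polarization
`W(i, j; k, l) = w_{ij,k,l} - w_{i,k,l} - w_{j,k,l}`, which is symmetric in `i, j` and in `k, l`,
and it remains to show that `W(i, j; k, l) = W(i, k; j, l)`.

The part of the difference that is quadratic in `f` is `{f_{jkl}, f_{ijl} + f_{ikl}}`. Relation (R5)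
says `[f_{ijk}, f_{jkl}] = -{f_{ijl} + f_{ikl}, p_{jk}} / 2`; bracketing it with `p_{kl}`, the term
`[p_{kl}, p_{jk}] = -2 f_{jkl}` produces that anticommutator, and every other term is a polynomial
in the `p`s and `C_i` by (R3) and (R4).
-/

/-- A family `C` of elements of a `ℂ`-algebra satisfying the defining relations of `R(4)`, with the
indices `1, 2, 3, 4` encoded as the elements of `Fin 4`. -/
structure IsRacahFamily (C : Finset (Fin 4) → A) : Prop where
  empty : C ∅ = 0
  r1 : RelR1 C
  r2 : RelR2 C
  r3 : RelR3 C
  r4 : RelR4 C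
  r5 : RelR5 C

/-- The polarization `p_{IJ} = C_{IJ} - C_I - C_J` of `C`, meaningful for disjoint `I` and `J`. -/
def polar (C : Finset (Fin 4) → A) (I J : Finset (Fin 4)) : A := C (I ∪ J) - C I - C J

/-- The element `f_{IJK} = [p_{IJ}, p_{JK}] / 2`; in `R(4)` it is alternating and equal to
`[C_{IJ}, C_{JK}] / 2` on nonempty pairwise disjoint `I, J, K`. -/
def triple (C : Finset (Fin 4) → A) (I J K : Finset (Fin 4)) : A :=
  ((1 : ℂ) / 2) • cm (polar C I J) (polar C J K)

/-- The polarization of `w_{I,J,K}` in its first index; on four distinct singletons its value is the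
element `2 x_{1234}` of the paper. -/
def wPolar (C : Finset (Fin 4) → A) (I I' J K : Finset (Fin 4)) : A :=
  wElt C (I ∪ I') J K - wElt C I J K - wElt C I' J K

/-- `I, J, K` are nonempty and pairwise disjoint: the index triples of (R3) and of `w_{I,J,K}`. -/
structure DisjointTriple (I J K : Finset (Fin 4)) : Prop where
  nonempty_left : I.Nonempty
  nonempty_mid : J.Nonempty
  nonempty_right : K.Nonempty
  left_mid : Disjoint I J
  mid_right : Disjoint J K
  left_right : Disjoint I K

namespace DisjointTriple

variable {I I' J K : Finset (Fin 4)}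

theorem rotate (h : DisjointTriple I J K) : DisjointTriple J K I :=
  ⟨h.2, h.3, h.1, h.mid_right, h.left_right.symm, h.left_mid.symm⟩

theorem reverse (h : DisjointTriple I J K) : DisjointTriple K J I :=
  ⟨h.3, h.2, h.1, h.mid_right.symm, h.left_mid.symm, h.left_right.symm⟩

theorem union_left (h : DisjointTriple I J K) (h' : DisjointTriple I' J K) :
    DisjointTriple (I ∪ I') J K :=
  ⟨h.1.mono subset_union_left, h.2, h.3, disjoint_union_left.mpr ⟨h.left_mid, h'.left_mid⟩,
    h.mid_right, disjoint_union_left.mpr ⟨h.left_right, h'.left_right⟩⟩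

theorem singletons {i j k : Fin 4} (h : [i, j, k].Nodup) : DisjointTriple {i} {j} {k} :=
  ⟨singleton_nonempty i, singleton_nonempty j, singleton_nonempty k,
    disjoint_singleton.mpr (by grind), disjoint_singleton.mpr (by grind),
    disjoint_singleton.mpr (by grind)⟩

end DisjointTriple

theorem cm_swap {B : Type*} [Ring B] (a b : B) : cm b a = -cm a b := by simp [cm]

theorem cm_eq_zero_iff_commute {B : Type*} [Ring B] {a b : B} : cm a b = 0 ↔ Commute a b :=
  sub_eq_zero

theorem cm_add_right {B : Type*} [Ring B] (a b c : B) : cm a (b + c) = cm a b + cm a c := by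
  simp only [cm, mul_add, add_mul, add_sub_add_comm]

-- Bracket `hgf` with `q`: the Jacobi identity on the left, the Leibniz rule on the right.
theorem acm_eq_of_cm_eq_neg_acm {p q f g G : A} (hgf : cm g f = ((-1 : ℂ) / 2) • acm G p)
    (hpq : cm p q = (2 : ℂ) • f) :
    acm f G = ((1 : ℂ) / 2) • acm p (cm q G) + cm (cm q g) f - cm (cm q f) g := by
  linear_combination (norm := skip) hgf * q - q * hgf - ((1 : ℂ) / 2) • (hpq * G + G * hpq)
  simp only [cm, acm, mul_add, add_mul, mul_sub, sub_mul, smul_add, smul_sub,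
    mul_smul_comm, smul_mul_assoc, mul_assoc]
  module

theorem polar_comm {B : Type*} [Ring B] (C : Finset (Fin 4) → B) (I J : Finset (Fin 4)) :
    polar C J I = polar C I J := by
  rw [polar, polar, union_comm]; abel

theorem apply_union {B : Type*} [Ring B] (C : Finset (Fin 4) → B) (I J : Finset (Fin 4)) :
    C (I ∪ J) = C I + C J + polar C I J := by
  rw [polar]; abel

theorem cm_polar_polar (C : Finset (Fin 4) → A) (I J K : Finset (Fin 4)) :
    cm (polar C I J) (polar C J K) = (2 : ℂ) • triple C I J K := by
  rw [triple]; module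

theorem triple_reverse (C : Finset (Fin 4) → A) (I J K : Finset (Fin 4)) :
    triple C K J I = -triple C I J K := by
  rw [triple, triple, polar_comm C J K, polar_comm C I J, cm_swap, smul_neg]

theorem commute_triple {C : Finset (Fin 4) → A} {I J K : Finset (Fin 4)} {a : A}
    (hx : Commute a (polar C I J)) (hy : Commute a (polar C J K)) : Commute a (triple C I J K) :=
  ((hx.mul_right hy).sub_right (hy.mul_right hx)).smul_right _

theorem wPolar_comm_left (C : Finset (Fin 4) → A) (I I' J K : Finset (Fin 4)) :
    wPolar C I' I J K = wPolar C I I' J K := by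
  rw [wPolar, wPolar, union_comm, sub_right_comm]

namespace IsRacahFamily

variable {C : Finset (Fin 4) → A} {I I' J J' K K' S : Finset (Fin 4)} {i j k l : Fin 4}

/-! ### Additivity of the polarization -/

theorem commute_of_disjoint (hC : IsRacahFamily C) (h : Disjoint I J) : Commute (C I) (C J) :=
  cm_eq_zero_iff_commute.mp <| hC.r1 I J <| Or.inl <| disjoint_iff_inter_eq_empty.mp h

theorem commute_of_subset (hC : IsRacahFamily C) (h : I ⊆ J) : Commute (C I) (C J) :=
  cm_eq_zero_iff_commute.mp <| hC.r1 I J <| Or.inr <| Or.inl h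

theorem commute_polar_of_disjoint (hC : IsRacahFamily C) (hI : Disjoint S I) (hJ : Disjoint S J) :
    Commute (C S) (polar C I J) :=
  ((hC.commute_of_disjoint (hI.sup_right hJ)).sub_right (hC.commute_of_disjoint hI)).sub_right
    (hC.commute_of_disjoint hJ)

theorem commute_polar_of_subset (hC : IsRacahFamily C) (hI : S ⊆ I) (hIJ : Disjoint I J) :
    Commute (C S) (polar C I J) :=
  ((hC.commute_of_subset (hI.trans subset_union_left)).sub_right
    (hC.commute_of_subset hI)).sub_right (hC.commute_of_disjoint (hIJ.mono_left hI))

-- Restoring the diagonal terms `C_{ii} = C_i` makes (R2) valid for every `I`, and makes it visibly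
-- quadratic in the indicator function of `I`.
theorem apply_eq_sum (hC : IsRacahFamily C) (I : Finset (Fin 4)) :
    C I = ((1 : ℂ) / 2) • ∑ i ∈ I, ∑ j ∈ I, C {i, j} + ((3 : ℂ) / 2 - I.card) • ∑ i ∈ I, C {i} := by
  have off_diagonal : ∑ i ∈ I, ∑ j ∈ I \ {i}, C {i, j}
      = ∑ i ∈ I, ∑ j ∈ I, C {i, j} - ∑ i ∈ I, C {i} := by
    rw [← sum_sub_distrib]
    refine sum_congr rfl fun i hi => ?_
    rw [sdiff_singleton_eq_erase, sum_erase_eq_sub hi, pair_eq_singleton]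
  by_cases h : 3 ≤ I.card
  · conv_lhs => rw [hC.r2 I h, off_diagonal]
    module
  · obtain h | h | h : I.card = 0 ∨ I.card = 1 ∨ I.card = 2 := by omega
    · simp [card_eq_zero.mp h, hC.empty]
    · obtain ⟨i, rfl⟩ := card_eq_one.mp h
      simp only [sum_singleton, pair_eq_singleton, card_singleton]
      module
    · obtain ⟨i, j, hij, rfl⟩ := card_eq_two.mp h
      simp only [sum_pair hij, pair_eq_singleton, card_pair hij, pair_comm j i]
      module

theorem polar_union_left (hC : IsRacahFamily C) (hII' : Disjoint I I') (hIJ : Disjoint I J)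
    (hI'J : Disjoint I' J) : polar C (I ∪ I') J = polar C I J + polar C I' J := by
  have hU : Disjoint (I ∪ I') J := disjoint_union_left.mpr ⟨hIJ, hI'J⟩
  simp only [polar, hC.apply_eq_sum (_ ∪ _), hC.apply_eq_sum I, hC.apply_eq_sum I',
    hC.apply_eq_sum J, sum_union hU, sum_union hIJ, sum_union hI'J, sum_union hII',
    card_union_of_disjoint hU, card_union_of_disjoint hIJ, card_union_of_disjoint hI'J,
    card_union_of_disjoint hII', sum_add_distrib, Nat.cast_add]
  module

theorem triple_union_left (hC : IsRacahFamily C) (hII' : Disjoint I I') (hIJ : Disjoint I J)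
    (hI'J : Disjoint I' J) : triple C (I ∪ I') J K = triple C I J K + triple C I' J K := by
  simp only [triple, hC.polar_union_left hII' hIJ hI'J, cm, add_mul, mul_add]
  module

theorem cm_apply_union (hC : IsRacahFamily C) (hIJ : Disjoint I J) (hJK : Disjoint J K)
    (hIK : Disjoint I K) : cm (C (I ∪ J)) (C (J ∪ K)) = (2 : ℂ) • triple C I J K := by
  have hI := cm_eq_zero_iff_commute.mpr (hC.commute_polar_of_disjoint hIJ hIK)
  have hJ := cm_eq_zero_iff_commute.mpr (hC.commute_polar_of_subset subset_rfl hJK)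
  have hIJ' := cm_eq_zero_iff_commute.mpr (hC.commute_of_subset (subset_union_right : J ⊆ I ∪ J))
  have hK := cm_eq_zero_iff_commute.mpr
    (hC.commute_of_disjoint (disjoint_union_left.mpr ⟨hIK, hJK⟩))
  rw [← cm_polar_polar]
  simp only [polar, cm, mul_sub, sub_mul] at hI hJ hIJ' hK ⊢
  linear_combination (norm := module) hI + hJ - hIJ' + hK

/-! ### Symmetry of `w` -/

theorem apply_union_union (hC : IsRacahFamily C) (h : DisjointTriple I J K) :
    C (I ∪ J ∪ K) = C I + C J + C K + polar C I J + polar C J K + polar C I K := by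
  rw [apply_union C, apply_union C, hC.polar_union_left h.left_mid h.left_right h.mid_right]
  abel

theorem triple_rotate (hC : IsRacahFamily C) (h : DisjointTriple I J K) :
    triple C J K I = triple C I J K := by
  have hr3 := (hC.r3 I J K h.1 h.2 h.3 h.left_mid h.mid_right h.left_right).1
  rw [hC.cm_apply_union h.left_mid h.mid_right h.left_right, union_comm I K,
    hC.cm_apply_union h.mid_right h.left_right.symm h.left_mid.symm] at hr3
  linear_combination (norm := module) ((-1 : ℂ) / 2) • hr3

theorem triple_swap_right (hC : IsRacahFamily C) (h : DisjointTriple I J K) :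
    triple C I K J = -triple C I J K := by
  rw [triple_reverse, hC.triple_rotate h]

theorem commute_polars (hC : IsRacahFamily C) (h : DisjointTriple I J K) :
    ∀ S ∈ ({I, J, K} : Set (Finset (Fin 4))), Commute (C S) (polar C I J) ∧
      Commute (C S) (polar C J K) ∧ Commute (C S) (polar C I K) := by
  have commute_left {S T : Finset (Fin 4)} (hST : Disjoint S T) : Commute (C S) (polar C S T) :=
    hC.commute_polar_of_subset subset_rfl hST
  have commute_right {S T : Finset (Fin 4)} (hST : Disjoint S T) : Commute (C T) (polar C S T) :=
    polar_comm C T S ▸ commute_left hST.symm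
  rintro S (rfl | rfl | rfl)
  · exact ⟨commute_left h.left_mid, hC.commute_polar_of_disjoint h.left_mid h.left_right,
      commute_left h.left_right⟩
  · exact ⟨commute_right h.left_mid, commute_left h.mid_right,
      hC.commute_polar_of_disjoint h.left_mid.symm h.mid_right⟩
  · exact ⟨hC.commute_polar_of_disjoint h.left_right.symm h.mid_right.symm,
      commute_right h.mid_right, commute_right h.left_right⟩

theorem cm_polar_mid_right_triple (hC : IsRacahFamily C) (h : DisjointTriple I J K) :
    cm (polar C J K) (triple C I J K) =
      ((1 : ℂ) / 2) • acm (polar C J K) (polar C I K - polar C I J)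
        + (2 : ℂ) • (C J * polar C I K) - (2 : ℂ) • (C K * polar C I J) := by
  obtain ⟨⟨-, hIy, -⟩, ⟨hJx, hJy, hJz⟩, hKx, hKy, hKz⟩ := by simpa using hC.commute_polars h
  have hJI := (hC.commute_of_disjoint h.left_mid).symm
  have hKJ := (hC.commute_of_disjoint h.mid_right).symm
  have hKI := (hC.commute_of_disjoint h.left_right).symm
  have hJg := commute_triple hJx hJy
  have hKg := commute_triple hKx hKy
  have hxy := cm_polar_polar C I J K
  have hyz := cm_polar_polar C J K I
  rw [hC.triple_rotate h, polar_comm C I K] at hyz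
  have hr3 := (hC.r3 I J K h.1 h.2 h.3 h.left_mid h.mid_right h.left_right).2.2
  rw [hC.cm_apply_union h.left_mid h.mid_right h.left_right, hC.apply_union_union h,
    apply_union C I J, apply_union C J K, apply_union C I K] at hr3
  linear_combination (norm := skip) ((1 : ℂ) / 2) • (hr3 + hxy - hyz)
  simp only [cm, acm, two_mul, mul_add, add_mul, mul_sub, sub_mul, smul_add, smul_sub,
    mul_smul_comm, smul_mul_assoc, hIy.eq, hJx.eq, hJy.eq, hJz.eq, hKx.eq, hKy.eq, hKz.eq,
    hJI.eq, hKJ.eq, hKI.eq, hJg.eq, hKg.eq]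
  module

theorem cm_polar_left_mid_triple (hC : IsRacahFamily C) (h : DisjointTriple I J K) :
    cm (polar C I J) (triple C I J K) =
      ((1 : ℂ) / 2) • acm (polar C I J) (polar C J K - polar C I K)
        + (2 : ℂ) • (C I * polar C J K) - (2 : ℂ) • (C J * polar C I K) := by
  rw [hC.triple_rotate h.rotate.rotate, hC.cm_polar_mid_right_triple h.rotate.rotate,
    polar_comm C J K, polar_comm C I K]

theorem cm_polar_left_right_triple (hC : IsRacahFamily C) (h : DisjointTriple I J K) :
    cm (polar C I K) (triple C I J K) =
      ((1 : ℂ) / 2) • acm (polar C I K) (polar C I J - polar C J K)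
        + (2 : ℂ) • (C K * polar C I J) - (2 : ℂ) • (C I * polar C J K) := by
  rw [← hC.triple_rotate h, polar_comm C K I, hC.cm_polar_mid_right_triple h.rotate,
    polar_comm C I J]

theorem wElt_eq (hC : IsRacahFamily C) (h : DisjointTriple I J K) :
    wElt C I J K = triple C I J K ^ 2 + (4 : ℂ) • (C I * C J * C K)
      - C I * polar C J K ^ 2 - C J * polar C I K ^ 2 - C K * polar C I J ^ 2
      + ((1 : ℂ) / 2) • (polar C I J * polar C J K * polar C I K
        + polar C I K * polar C J K * polar C I J)
      - ((1 : ℂ) / 2) • acm (polar C J K) (polar C I J + polar C I K)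
      - (2 : ℂ) • (C I * polar C J K) := by
  obtain ⟨⟨hIx, hIy, hIz⟩, ⟨hJx, hJy, hJz⟩, hKx, hKy, hKz⟩ := by
    simpa using hC.commute_polars h
  have hJI := (hC.commute_of_disjoint h.left_mid).symm
  have hKJ := (hC.commute_of_disjoint h.mid_right).symm
  have hKI := (hC.commute_of_disjoint h.left_right).symm
  have hxy := cm_polar_polar C I J K
  have hyz := cm_polar_polar C J K I
  have hzx := cm_polar_polar C K I J
  have hxg := hC.cm_polar_left_mid_triple h
  rw [hC.triple_rotate h, polar_comm C I K] at hyz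
  rw [← hC.triple_rotate h.rotate.rotate, polar_comm C I K] at hzx
  rw [wElt, hC.cm_apply_union h.left_mid h.mid_right h.left_right, hC.apply_union_union h,
    apply_union C I J, apply_union C J K]
  linear_combination (norm := skip) ((1 : ℂ) / 2) • (hyz - hzx) - hxg
    + ((1 : ℂ) / 2) • (hxy * polar C I J - hxy * polar C J K
      + hzx * polar C J K - polar C I J * hyz) - C J * hyz + C J * hzx
  simp only [cm, acm, pow_two, two_mul, mul_add, add_mul, mul_sub, sub_mul, smul_add, smul_sub,
    mul_smul_comm, smul_mul_assoc, smul_smul, mul_assoc, hIx.eq, hIy.eq, hIz.eq, hJx.eq, hJy.eq,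
    hJz.eq, hKx.eq, hKy.eq, hKz.eq, hJI.eq, hKJ.eq, hKI.eq, hIx.left_comm, hIy.left_comm,
    hIz.left_comm, hJx.left_comm, hJy.left_comm, hJz.left_comm, hKx.left_comm, hKy.left_comm,
    hJI.left_comm, hKJ.left_comm, hKI.left_comm]
  module

theorem wElt_swap_right (hC : IsRacahFamily C) (h : DisjointTriple I J K) :
    wElt C I K J = wElt C I J K := by
  rw [hC.wElt_eq h, hC.wElt_eq h.rotate.reverse, hC.triple_swap_right h, polar_comm C J K,
    (hC.commute_of_disjoint h.mid_right).right_comm, neg_sq, add_comm (polar C I K)]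
  module

theorem wElt_reverse (hC : IsRacahFamily C) (h : DisjointTriple I J K) :
    wElt C K J I = wElt C I J K := by
  have hIJ := hC.commute_of_disjoint h.left_mid
  have hJK := hC.commute_of_disjoint h.mid_right
  have hIK := hC.commute_of_disjoint h.left_right
  have hI : Commute (C I) (C (I ∪ J ∪ K)) :=
    hC.commute_of_subset (subset_union_left.trans subset_union_left)
  have hJ : Commute (C J) (C (I ∪ J ∪ K)) :=
    hC.commute_of_subset (subset_union_right.trans subset_union_left)
  have hK : Commute (C K) (C (I ∪ J ∪ K)) := hC.commute_of_subset subset_union_right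
  have union_eq : K ∪ J ∪ I = I ∪ J ∪ K := by rw [union_comm, union_comm K, union_assoc]
  rw [wElt, wElt, union_eq, union_comm K J, union_comm J I]
  simp only [cm, acm, pow_two, two_mul, mul_add, add_mul, mul_sub, sub_mul, smul_add, smul_sub,
    mul_assoc, hIJ.eq, hIK.eq, hJK.eq, hI.eq, hJ.eq, hK.eq, hK.left_comm]
  module

theorem wElt_swap_left (hC : IsRacahFamily C) (h : DisjointTriple I J K) :
    wElt C J I K = wElt C I J K := by
  rw [hC.wElt_reverse h.rotate.rotate, hC.wElt_swap_right h.reverse, hC.wElt_reverse h]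

/-! ### The polarization of `w` -/

theorem wElt_union_mid_sub (hC : IsRacahFamily C) (h : DisjointTriple J I K)
    (h' : DisjointTriple J' I K) :
    wElt C I (J ∪ J') K - wElt C I J K - wElt C I J' K = wPolar C J J' I K := by
  rw [wPolar, hC.wElt_swap_left h, hC.wElt_swap_left h', hC.wElt_swap_left (h.union_left h')]

theorem wElt_union_right_sub (hC : IsRacahFamily C) (h : DisjointTriple K J I)
    (h' : DisjointTriple K' J I) :
    wElt C I J (K ∪ K') - wElt C I J K - wElt C I J K' = wPolar C K K' J I := by
  rw [wPolar, hC.wElt_reverse h, hC.wElt_reverse h', hC.wElt_reverse (h.union_left h')]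

theorem wPolar_comm_right (hC : IsRacahFamily C) (h : DisjointTriple I J K)
    (h' : DisjointTriple I' J K) : wPolar C I I' K J = wPolar C I I' J K := by
  rw [wPolar, wPolar, hC.wElt_swap_right h, hC.wElt_swap_right h',
    hC.wElt_swap_right (h.union_left h')]

theorem wPolar_eq (hC : IsRacahFamily C) (hII' : Disjoint I I') (h : DisjointTriple I J K)
    (h' : DisjointTriple I' J K) :
    wPolar C I I' J K = acm (triple C I J K) (triple C I' J K)
      + (4 : ℂ) • (polar C I I' * C J * C K) - polar C I I' * polar C J K ^ 2
      - C J * acm (polar C I K) (polar C I' K) - C K * acm (polar C I J) (polar C I' J)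
      + ((1 : ℂ) / 2) • (polar C I J * polar C J K * polar C I' K
        + polar C I' K * polar C J K * polar C I J + polar C I' J * polar C J K * polar C I K
        + polar C I K * polar C J K * polar C I' J)
      - (2 : ℂ) • (polar C I I' * polar C J K) := by
  rw [wPolar, hC.wElt_eq h, hC.wElt_eq h', hC.wElt_eq (h.union_left h'), apply_union C I I',
    hC.polar_union_left hII' h.left_mid h'.left_mid,
    hC.polar_union_left hII' h.left_right h'.left_right,
    hC.triple_union_left hII' h.left_mid h'.left_mid]
  simp only [acm, pow_two, mul_add, add_mul, mul_assoc]
  module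

/-! ### Four distinct indices -/

theorem commute_singleton (hC : IsRacahFamily C) (i : Fin 4) (I : Finset (Fin 4)) :
    Commute (C {i}) (C I) := by
  by_cases hi : i ∈ I
  · exact hC.commute_of_subset (singleton_subset_iff.mpr hi)
  · exact hC.commute_of_disjoint (disjoint_singleton_left.mpr hi)

theorem commute_singleton_polar (hC : IsRacahFamily C) (i : Fin 4) (I J : Finset (Fin 4)) :
    Commute (C {i}) (polar C I J) :=
  ((hC.commute_singleton i _).sub_right (hC.commute_singleton i I)).sub_right
    (hC.commute_singleton i J)

theorem commute_singleton_triple (hC : IsRacahFamily C) (i : Fin 4) (I J K : Finset (Fin 4)) :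
    Commute (C {i}) (triple C I J K) :=
  commute_triple (hC.commute_singleton_polar i I J) (hC.commute_singleton_polar i J K)

local notation "P[" i "," j "]" => polar C {i} {j}

local notation "T[" i "," j "," k "]" => triple C {i} {j} {k}

theorem commute_polar_polar (hC : IsRacahFamily C) (h : [i, j, k, l].Nodup) :
    Commute P[i, j] P[k, l] := by
  have hk : Disjoint ({i} ∪ {j} : Finset (Fin 4)) {k} := by grind [disjoint_left]
  have hl : Disjoint ({i} ∪ {j} : Finset (Fin 4)) {l} := by grind [disjoint_left]
  exact ((hC.commute_polar_of_disjoint hk hl).sub_left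
    (hC.commute_singleton_polar i _ _)).sub_left (hC.commute_singleton_polar j _ _)

theorem cm_polar_right_fourth_triple (hC : IsRacahFamily C) (h : [i, j, k, l].Nodup) :
    cm P[k, l] T[i, j, k] = P[i, k] * P[j, l] - P[i, l] * P[j, k] := by
  have hr4 := hC.r4 i j k l (by grind) (by grind) (by grind) (by grind) (by grind) (by grind)
  have ht : DisjointTriple {i} {j} {k} := .singletons (by grind)
  simp only [insert_eq] at hr4
  rw [hC.cm_apply_union ht.left_mid ht.mid_right ht.left_right] at hr4
  simp only [apply_union C] at hr4
  linear_combination (norm := skip) hr4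
  simp only [cm, mul_add, add_mul, mul_sub, sub_mul, smul_add, smul_sub, mul_smul_comm,
    smul_mul_assoc, (hC.commute_singleton_polar _ _ _).eq, (hC.commute_singleton_triple _ _ _ _).eq,
    (hC.commute_singleton _ {_}).eq]
  module

theorem cm_polar_left_fourth_triple (hC : IsRacahFamily C) (h : [i, j, k, l].Nodup) :
    cm P[i, l] T[i, j, k] = P[i, j] * P[k, l] - P[i, k] * P[j, l] := by
  rw [← hC.triple_rotate (.singletons (by grind)),
    hC.cm_polar_right_fourth_triple (by grind), polar_comm C {i} {j}, polar_comm C {i} {k},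
    (hC.commute_polar_polar (i := j) (j := l) (by grind)).eq]

theorem cm_polar_mid_fourth_triple (hC : IsRacahFamily C) (h : [i, j, k, l].Nodup) :
    cm P[j, l] T[i, j, k] = P[i, l] * P[j, k] - P[i, j] * P[k, l] := by
  have ht : DisjointTriple {i} {j} {k} := .singletons (by grind)
  rw [hC.triple_rotate ht.rotate.rotate, hC.cm_polar_right_fourth_triple (by grind),
    polar_comm C {j} {k}, (hC.commute_polar_polar (i := j) (j := k) (by grind)).eq,
    (hC.commute_polar_polar (i := k) (j := l) (by grind)).eq]

theorem commute_polar_triple_add (hC : IsRacahFamily C) (h : [i, j, k, l].Nodup) :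
    Commute P[j, k] (T[i, j, l] + T[i, k, l]) := by
  have hj : DisjointTriple {i} {j} {l} := .singletons (by grind)
  have hk : DisjointTriple {i} {k} {l} := .singletons (by grind)
  have triple_union : triple C {j, k} {l} {i} = T[i, j, l] + T[i, k, l] := by
    rw [insert_eq, hC.triple_union_left (by grind [disjoint_left]) hj.mid_right hk.mid_right,
      hC.triple_rotate hj, hC.triple_rotate hk]
  rw [← triple_union]
  have commute_pair : Commute (C {j, k}) (triple C {j, k} {l} {i}) :=
    commute_triple (hC.commute_polar_of_subset subset_rfl (by grind [disjoint_left]))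
      (hC.commute_polar_of_disjoint (by grind [disjoint_left]) (by grind [disjoint_left]))
  exact (commute_pair.sub_left (hC.commute_singleton_triple j _ _ _)).sub_left
    (hC.commute_singleton_triple k _ _ _)

theorem cm_triple_triple (hC : IsRacahFamily C) (h : [i, j, k, l].Nodup) :
    cm T[i, j, k] T[j, k, l] =
      ((-1 : ℂ) / 2) • acm (T[i, j, l] + T[i, k, l]) P[j, k] := by
  have hr5 := hC.r5 i j k l (by grind) (by grind) (by grind) (by grind) (by grind) (by grind)
  simp only [insert_eq] at hr5
  rw [hC.cm_apply_union, hC.cm_apply_union, hC.cm_apply_union, hC.cm_apply_union, ← polar] at hr5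
  · rw [acm, (hC.commute_polar_triple_add h).eq]
    linear_combination (norm := skip) ((1 : ℂ) / 2) • hr5
    simp only [cm, add_mul, smul_mul_assoc, mul_smul_comm]
    module
  all_goals grind [disjoint_left]

theorem cm_polar_triple_add (hC : IsRacahFamily C) (h : [i, j, k, l].Nodup) :
    cm P[k, l] (T[i, j, l] + T[i, k, l]) =
      P[i, l] * P[j, k] - P[i, k] * P[j, l]
      + ((1 : ℂ) / 2) • acm P[k, l] (P[i, l] - P[i, k])
      + (2 : ℂ) • (C {k} * P[i, l]) - (2 : ℂ) • (C {l} * P[i, k]) := by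
  have hijlk : [i, j, l, k].Nodup := by grind
  have hikl : DisjointTriple {i} {k} {l} := .singletons (by grind)
  have hijl := hC.cm_polar_right_fourth_triple hijlk
  rw [polar_comm C {k} {l}] at hijl
  rw [cm_add_right, hijl, hC.cm_polar_mid_right_triple hikl]
  abel

-- The symmetrized form of (R4), which keeps the later Leibniz expansions symmetric.
theorem cm_polar_triple_eq_acm (hC : IsRacahFamily C) (h : [i, j, k, l].Nodup) :
    cm P[k, l] T[i, j, k] =
      ((1 : ℂ) / 2) • (acm P[i, k] P[j, l] - acm P[i, l] P[j, k]) := by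
  have hikjl : [i, k, j, l].Nodup := by grind
  have hiljk : [i, l, j, k].Nodup := by grind
  rw [hC.cm_polar_right_fourth_triple h, acm, acm, (hC.commute_polar_polar hikjl).eq,
    (hC.commute_polar_polar hiljk).eq]
  module

theorem cm_cm_polar_triple_triple (hC : IsRacahFamily C) (h : [i, j, k, l].Nodup) :
    cm (cm P[k, l] T[i, j, k]) T[j, k, l] =
      ((1 : ℂ) / 2) • (acm (P[i, j] * P[k, l] - P[i, l] * P[j, k]) P[j, l]
        + acm P[i, k] (((1 : ℂ) / 2) • acm P[j, l] (P[j, k] - P[k, l])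
          + (2 : ℂ) • (C {l} * P[j, k]) - (2 : ℂ) • (C {j} * P[k, l]))
        - acm (P[i, k] * P[j, l] - P[i, j] * P[k, l]) P[j, k]
        - acm P[i, l] (((1 : ℂ) / 2) • acm P[j, k] (P[k, l] - P[j, l])
          + (2 : ℂ) • (C {j} * P[k, l]) - (2 : ℂ) • (C {k} * P[j, l]))) := by
  have hjkl : DisjointTriple {j} {k} {l} := .singletons (by grind)
  have hjkli : [j, k, l, i].Nodup := by grind
  have hikjl : [i, k, j, l].Nodup := by grind
  have hiljk : [i, l, j, k].Nodup := by grind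
  have hik := hC.cm_polar_mid_fourth_triple hjkli
  have hil := hC.cm_polar_right_fourth_triple hjkli
  have hjl := hC.cm_polar_left_right_triple hjkl
  have hjk := hC.cm_polar_left_mid_triple hjkl
  rw [polar_comm C {i} {k}, polar_comm C {i} {j}, polar_comm C {i} {l},
    ← (hC.commute_polar_polar hiljk).eq] at hik
  rw [polar_comm C {i} {k}, polar_comm C {i} {j}, polar_comm C {i} {l},
    ← (hC.commute_polar_polar hikjl).eq] at hil
  simp only [hC.cm_polar_triple_eq_acm h, ← hik, ← hil, ← hjl, ← hjk]
  simp only [cm, acm, mul_sub, sub_mul, mul_add, add_mul, smul_sub, mul_smul_comm,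
    smul_mul_assoc, mul_assoc]
  module

theorem cm_cm_polar_right_triple_triple (hC : IsRacahFamily C) (h : [i, j, k, l].Nodup) :
    cm (cm P[k, l] T[j, k, l]) T[i, j, k] =
      ((1 : ℂ) / 2) • acm (P[i, k] * P[j, l] - P[i, l] * P[j, k]) (P[j, l] - P[j, k])
      + ((1 : ℂ) / 2) • acm P[k, l] (P[i, l] * P[j, k] - P[i, j] * P[k, l]
        - ((1 : ℂ) / 2) • acm P[j, k] (P[i, k] - P[i, j])
        - (2 : ℂ) • (C {j} * P[i, k]) + (2 : ℂ) • (C {k} * P[i, j]))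
      + (2 : ℂ) • (C {k} * (P[i, l] * P[j, k] - P[i, j] * P[k, l]))
      - (2 : ℂ) • (C {l} * (((1 : ℂ) / 2) • acm P[j, k] (P[i, k] - P[i, j])
        + (2 : ℂ) • (C {j} * P[i, k]) - (2 : ℂ) • (C {k} * P[i, j]))) := by
  have hijk : DisjointTriple {i} {j} {k} := .singletons (by grind)
  have hjkl : DisjointTriple {j} {k} {l} := .singletons (by grind)
  have hkl := hC.cm_polar_right_fourth_triple h
  have hjl := hC.cm_polar_mid_fourth_triple h
  have hjk := hC.cm_polar_mid_right_triple hijk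
  rw [hC.cm_polar_mid_right_triple hjkl]
  linear_combination (norm := skip)
    ((1 : ℂ) / 2) • (hkl * (P[j, l] - P[j, k]) + (P[j, l] - P[j, k]) * hkl
      + (hjl - hjk) * P[k, l] + P[k, l] * (hjl - hjk))
    + (2 : ℂ) • (C {k} * hjl - C {l} * hjk)
  simp only [cm, acm, mul_sub, sub_mul, mul_add, add_mul, smul_add, smul_sub, mul_smul_comm,
    smul_mul_assoc, mul_assoc, (hC.commute_singleton_triple _ _ _ _).symm.left_comm]
  module

theorem acm_triple_triple_add (hC : IsRacahFamily C) (h : [i, j, k, l].Nodup) :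
    acm T[j, k, l] (T[i, j, l] + T[i, k, l]) =
      (4 : ℂ) • (P[i, k] * C {j} * C {l}) - (4 : ℂ) • (P[i, j] * C {k} * C {l})
      - P[i, k] * P[j, l] ^ 2 + P[i, j] * P[k, l] ^ 2
      - C {j} * acm P[i, l] P[k, l] + C {k} * acm P[i, l] P[j, l]
      - C {l} * acm (P[i, j] - P[i, k]) P[j, k]
      + ((1 : ℂ) / 2) • (P[i, j] * P[j, l] * P[k, l] + P[k, l] * P[j, l] * P[i, j]
        + P[j, k] * P[j, l] * P[i, l] + P[i, l] * P[j, l] * P[j, k]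
        - P[i, k] * P[k, l] * P[j, l] - P[j, l] * P[k, l] * P[i, k]
        - P[j, k] * P[k, l] * P[i, l] - P[i, l] * P[k, l] * P[j, k])
      - (2 : ℂ) • (P[i, k] * P[j, l]) + (2 : ℂ) • (P[i, j] * P[k, l]) := by
  have hjkl : DisjointTriple {j} {k} {l} := .singletons (by grind)
  have hjkli : [j, k, l, i].Nodup := by grind
  have hiklj : [i, k, l, j].Nodup := by grind
  have hikjl : [i, k, j, l].Nodup := by grind
  have hiljk : [i, l, j, k].Nodup := by grind
  have hij_kl := hC.commute_polar_polar h
  have hik_jl := hC.commute_polar_polar hikjl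
  have hil_jk := hC.commute_polar_polar hiljk
  have hjk_kl := cm_polar_polar C {j} {k} {l}
  have hjl_kl := cm_polar_polar C {j} {l} {k}
  have hjk_jl := cm_polar_polar C {k} {j} {l}
  have hik_kl := cm_polar_polar C {i} {k} {l}
  have hij := hC.cm_polar_left_fourth_triple hjkli
  have hil := hC.cm_polar_right_fourth_triple hjkli
  have hjl := hC.cm_polar_right_fourth_triple hiklj
  rw [hC.triple_swap_right hjkl, polar_comm C {k} {l}] at hjl_kl
  rw [hC.triple_swap_right hjkl.rotate, hC.triple_rotate hjkl, polar_comm C {j} {k}] at hjk_jl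
  rw [polar_comm C {i} {j}, polar_comm C {i} {k}, polar_comm C {i} {l}] at hij hil
  rw [polar_comm C {j} {k}, polar_comm C {j} {l}] at hjl
  rw [acm_eq_of_cm_eq_neg_acm (hC.cm_triple_triple h) hjk_kl, hC.cm_polar_triple_add h,
    hC.cm_cm_polar_triple_triple h, hC.cm_cm_polar_right_triple_triple h]
  -- What remains combines double brackets `[p_{ab}, [p_{cd}, p_{de}]] = 2 [p_{ab}, f_{cde}]`.
  linear_combination (norm := skip)
    ((1 : ℂ) / 4) • (P[i, k] * (hjk_jl + hjk_kl) - (hjk_jl + hjk_kl) * P[i, k]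
        - P[j, l] * hik_kl + hik_kl * P[j, l]
        - P[i, j] * (hjk_kl + (2 : ℂ) • hjl_kl) + (hjk_kl + (2 : ℂ) • hjl_kl) * P[i, j]
        + P[i, l] * (hjk_jl - (2 : ℂ) • hjk_kl) - (hjk_jl - (2 : ℂ) • hjk_kl) * P[i, l])
      + ((1 : ℂ) / 2) • (hij - hjl) - ((3 : ℂ) / 2) • hil
  simp only [cm, acm, pow_two, mul_add, add_mul, mul_sub, sub_mul, smul_add, smul_sub,
    mul_smul_comm, smul_mul_assoc, smul_smul, mul_assoc, mul_neg, neg_mul, smul_neg,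
    ← (hC.commute_singleton_polar _ _ _).eq, (hC.commute_singleton_polar _ _ _).symm.left_comm,
    (hC.commute_singleton _ {_}).left_comm, hij_kl.eq, hik_jl.eq, hil_jk.eq,
    hij_kl.left_comm, hik_jl.left_comm, hil_jk.left_comm]
  module

theorem wPolar_swap_mid (hC : IsRacahFamily C) (h : [i, j, k, l].Nodup) :
    wPolar C {i} {k} {j} {l} = wPolar C {i} {j} {k} {l} := by
  have hikl : DisjointTriple {i} {k} {l} := .singletons (by grind)
  have hjkl : DisjointTriple {j} {k} {l} := .singletons (by grind)
  have hijl : DisjointTriple {i} {j} {l} := .singletons (by grind)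
  have hkjl : DisjointTriple {k} {j} {l} := hjkl.rotate.rotate.reverse
  rw [hC.wPolar_eq (disjoint_singleton.mpr (by grind)) hikl hjkl,
    hC.wPolar_eq (disjoint_singleton.mpr (by grind)) hijl hkjl,
    hC.triple_swap_right hjkl.rotate, hC.triple_rotate hjkl, polar_comm C {j} {k}]
  linear_combination (norm := skip) -hC.acm_triple_triple_add h
  simp only [acm, mul_add, add_mul, mul_sub, sub_mul, mul_neg, neg_mul]
  module

end IsRacahFamily

/-- In `R(4)`:
`w_{12,3,4} − w_{1,3,4} − w_{2,3,4} = w_{1,23,4} − w_{1,2,4} − w_{1,3,4}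
 = w_{1,2,34} − w_{1,2,3} − w_{1,2,4}`
(indices `1,2,3,4` are rendered as `0,1,2,3 : Fin 4`). -/
theorem stmt7 (C : Finset (Fin 4) → A) (hC0 : C ∅ = 0)
    (h1 : RelR1 C) (h2 : RelR2 C) (h3 : RelR3 C) (h4 : RelR4 C) (h5 : RelR5 C) :
    wElt C {0, 1} {2} {3} - wElt C {0} {2} {3} - wElt C {1} {2} {3}
      = wElt C {0} {1, 2} {3} - wElt C {0} {1} {3} - wElt C {0} {2} {3} ∧
    wElt C {0} {1, 2} {3} - wElt C {0} {1} {3} - wElt C {0} {2} {3}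
      = wElt C {0} {1} {2, 3} - wElt C {0} {1} {2} - wElt C {0} {1} {3} := by
  have hC : IsRacahFamily C := ⟨hC0, h1, h2, h3, h4, h5⟩
  have h103 : DisjointTriple {1} {0} {3} := .singletons (by decide)
  have h203 : DisjointTriple {2} {0} {3} := .singletons (by decide)
  have h210 : DisjointTriple {2} {1} {0} := .singletons (by decide)
  have h310 : DisjointTriple {3} {1} {0} := .singletons (by decide)
  simp only [insert_eq, hC.wElt_union_mid_sub h103 h203, hC.wElt_union_right_sub h210 h310]
  constructor
  · calc
      wPolar C {0} {1} {2} {3} = wPolar C {1} {0} {2} {3} := wPolar_comm_left C {1} {0} {2} {3}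
      _ = wPolar C {1} {2} {0} {3} := hC.wPolar_swap_mid (by decide)
  · calc
      wPolar C {1} {2} {0} {3} = wPolar C {2} {1} {0} {3} := wPolar_comm_left C {2} {1} {0} {3}
      _ = wPolar C {2} {1} {3} {0} := (hC.wPolar_comm_right h203 h103).symm
      _ = wPolar C {2} {3} {1} {0} := hC.wPolar_swap_mid (by decide)
end
end

section
/- Under the hypotheses of the finite-dimensional symmetric representation (inequalities on the j⁽ⁱ⁾ and N ∈ ℤ_{>0}), the representation of sR(4) on 𝓕_N is irreducible: the only ℂ-linear subspaces of 𝓕_N invariant under all five operators C₁₂, C₁₂₃, C₂₃, C₃₄, C₂₃₄ are {0} and 𝓕_N itself. -/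
noncomputable section

open Finset

/-! ### The finite-dimensional space `𝓕_N` and the symmetric representation -/

/-- The index set `{(n,p) : n,p ≥ 0, n+p ≤ N}` of the basis of `𝓕_N`. -/
abbrev SN (N : ℕ) : Type := {q : ℤ × ℤ // 0 ≤ q.1 ∧ 0 ≤ q.2 ∧ q.1 + q.2 ≤ (N : ℤ)}

/-- The space `𝓕_N`, with basis `|n,p⟩`, `n,p ≥ 0`, `n+p ≤ N`. -/
abbrev FN (N : ℕ) : Type := SN N →₀ ℂ

/-- The basis vector `|n,p⟩` if `(n,p)` is admissible, `0` otherwise. -/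
def ket (N : ℕ) (n p : ℤ) : FN N :=
  if h : 0 ≤ n ∧ 0 ≤ p ∧ n + p ≤ (N : ℤ) then Finsupp.single ⟨(n, p), h⟩ 1 else 0

/-- The endomorphism of `𝓕_N` sending `|n,p⟩` to `f n p`. -/
def mkOp (N : ℕ) (f : ℤ → ℤ → FN N) : Module.End ℂ (FN N) :=
  Finsupp.lift (FN N) ℂ (SN N) (fun q => f q.1.1 q.1.2)

/-- `μ_n = (n−j⁽¹⁾−j⁽²⁾−1)(n−j⁽¹⁾−j⁽²⁾)`. -/
def muN (j1 j2 : ℝ) (n : ℤ) : ℝ := ((n : ℝ) - j1 - j2 - 1) * ((n : ℝ) - j1 - j2)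

/-- `μ̂_p = (p−j⁽⁰⁾−j⁽⁴⁾−1)(p−j⁽⁰⁾−j⁽⁴⁾)`. -/
def muP (j0 j4 : ℝ) (p : ℤ) : ℝ := ((p : ℝ) - j0 - j4 - 1) * ((p : ℝ) - j0 - j4)

/-- `μ⁽ⁱ⁾ = j⁽ⁱ⁾(j⁽ⁱ⁾+1)`. -/
def mcc (j : ℝ) : ℝ := j * (j + 1)

/-- The off-diagonal coefficient `ψ_{n,p}` (nonnegative square root). -/
def psiR (j0 j1 j2 j3 j4 : ℝ) (N : ℕ) (n p : ℤ) : ℝ :=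
  Real.sqrt (((n : ℝ) * (2*j1 + 1 - n) * (2*j2 + 1 - n) * (2*j1 + 2*j2 + 2 - n) *
      ((N : ℝ) - n - p + 2*j3 + 2) * ((N : ℝ) - n - p + 1) *
      ((p : ℝ) - n - N + 2*j1 + 2*j2 + 1) * ((n : ℝ) - p - N + 2*j0 + 2*j4)) /
    ((2*j1 + 2*j2 + 2 - 2*(n : ℝ))^2 * (2*j1 + 2*j2 + 1 - 2*(n : ℝ)) *
      (2*j1 + 2*j2 + 3 - 2*(n : ℝ))))

/-- The off-diagonal coefficient `ρ_{n,p}` (nonnegative square root). -/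
def rhoR (j0 j1 j2 j3 j4 : ℝ) (N : ℕ) (n p : ℤ) : ℝ :=
  Real.sqrt (((p : ℝ) * (2*j4 + 1 - p) * (2*j0 + 1 - p) * (2*j4 + 2*j0 + 2 - p) *
      ((N : ℝ) - n - p + 2*j3 + 2) * ((N : ℝ) - n - p + 1) *
      ((p : ℝ) - n - N + 2*j1 + 2*j2) * ((n : ℝ) - p - N + 2*j0 + 2*j4 + 1)) /
    ((2*j0 + 2*j4 + 2 - 2*(p : ℝ))^2 * (2*j0 + 2*j4 + 1 - 2*(p : ℝ)) *
      (2*j0 + 2*j4 + 3 - 2*(p : ℝ))))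

/-- The diagonal coefficient `ψ⁰⁰_{n,p}`. -/
def psi00R (j0 j1 j2 j3 j4 : ℝ) (n p : ℤ) : ℝ :=
  (muN j1 j2 n + mcc j2 - mcc j1) * (muP j0 j4 p - mcc j3 - muN j1 j2 n) /
    (2 * muN j1 j2 n) + mcc j2 + mcc j3

/-- The diagonal coefficient `ρ⁰⁰_{n,p}`. -/
def rho00R (j0 j1 j2 j3 j4 : ℝ) (n p : ℤ) : ℝ :=
  (muP j0 j4 p + mcc j3 - muN j1 j2 n) * (mcc j0 - mcc j4 - muP j0 j4 p) /
    (2 * muP j0 j4 p) + mcc j3 + mcc j4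

/-- `φ^H_{n,p} = ((μ̂_p−μ⁽⁴⁾+μ⁽⁰⁾)/(2μ̂_p))ψ_{n,p}`. -/
def phiH (j0 j1 j2 j3 j4 : ℝ) (N : ℕ) (n p : ℤ) : ℝ :=
  (muP j0 j4 p - mcc j4 + mcc j0) / (2 * muP j0 j4 p) * psiR j0 j1 j2 j3 j4 N n p

/-- `φ^V_{n,p} = ((μ_n+μ⁽¹⁾−μ⁽²⁾)/(2μ_n))ρ_{n,p}`. -/
def phiV (j0 j1 j2 j3 j4 : ℝ) (N : ℕ) (n p : ℤ) : ℝ :=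
  (muN j1 j2 n + mcc j1 - mcc j2) / (2 * muN j1 j2 n) * rhoR j0 j1 j2 j3 j4 N n p

/-- The diagonal coefficient `φ⁰⁰_{n,p}` of `C₂₃₄`. -/
def phi00R (j0 j1 j2 j3 j4 : ℝ) (n p : ℤ) : ℝ :=
  (muN j1 j2 n + mcc j1 - mcc j2) / (2 * muN j1 j2 n) * rho00R j0 j1 j2 j3 j4 n p
    - ((muN j1 j2 n - mcc j1 - mcc j2 - mcc j0) * muN j1 j2 n
        + mcc j0 * (mcc j1 - mcc j2)) / (2 * muN j1 j2 n)

/-- `φ^D_{n,p} = −ψ_{n,p}ρ_{n−1,p}/((n−p+a₁₂−a₁₂₃+j⁽³⁾)(n−p+a₁₂−a₁₂₃−j⁽³⁾−1))`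
with `a₁₂ = −j⁽¹⁾−j⁽²⁾−1`, `a₁₂₃ = −j⁽⁰⁾−j⁽⁴⁾−1`. -/
def phiD (j0 j1 j2 j3 j4 : ℝ) (N : ℕ) (n p : ℤ) : ℝ :=
  -(psiR j0 j1 j2 j3 j4 N n p * rhoR j0 j1 j2 j3 j4 N (n - 1) p) /
    (((n : ℝ) - p + (-j1 - j2 - 1) - (-j0 - j4 - 1) + j3) *
      ((n : ℝ) - p + (-j1 - j2 - 1) - (-j0 - j4 - 1) - j3 - 1))

/-- `φ^A_{n,p} = −ψ_{n,p}ρ_{n,p}/((n+p+a₁₂+a₁₂₃+j⁽³⁾+1)(n+p+a₁₂+a₁₂₃−j⁽³⁾))`. -/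
def phiA (j0 j1 j2 j3 j4 : ℝ) (N : ℕ) (n p : ℤ) : ℝ :=
  -(psiR j0 j1 j2 j3 j4 N n p * rhoR j0 j1 j2 j3 j4 N n p) /
    (((n : ℝ) + p + (-j1 - j2 - 1) + (-j0 - j4 - 1) + j3 + 1) *
      ((n : ℝ) + p + (-j1 - j2 - 1) + (-j0 - j4 - 1) - j3))

/-- The diagonal operator `C₁₂`. -/
def opC12 (j0 j1 j2 j3 j4 : ℝ) (N : ℕ) : Module.End ℂ (FN N) :=
  mkOp N (fun n p => (muN j1 j2 n : ℂ) • ket N n p)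

/-- The diagonal operator `C₁₂₃`. -/
def opC123 (j0 j1 j2 j3 j4 : ℝ) (N : ℕ) : Module.End ℂ (FN N) :=
  mkOp N (fun n p => (muP j0 j4 p : ℂ) • ket N n p)

/-- The tridiagonal operator `C₂₃`. -/
def opC23 (j0 j1 j2 j3 j4 : ℝ) (N : ℕ) : Module.End ℂ (FN N) :=
  mkOp N (fun n p =>
    (psiR j0 j1 j2 j3 j4 N (n + 1) p : ℂ) • ket N (n + 1) p
    + (psi00R j0 j1 j2 j3 j4 n p : ℂ) • ket N n p
    + (psiR j0 j1 j2 j3 j4 N n p : ℂ) • ket N (n - 1) p)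

/-- The tridiagonal operator `C₃₄`. -/
def opC34 (j0 j1 j2 j3 j4 : ℝ) (N : ℕ) : Module.End ℂ (FN N) :=
  mkOp N (fun n p =>
    (rhoR j0 j1 j2 j3 j4 N n (p + 1) : ℂ) • ket N n (p + 1)
    + (rho00R j0 j1 j2 j3 j4 n p : ℂ) • ket N n p
    + (rhoR j0 j1 j2 j3 j4 N n p : ℂ) • ket N n (p - 1))

/-- The nine-term operator `C₂₃₄`. -/
def opC234 (j0 j1 j2 j3 j4 : ℝ) (N : ℕ) : Module.End ℂ (FN N) :=
  mkOp N (fun n p =>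
    (phiD j0 j1 j2 j3 j4 N (n + 1) (p + 1) : ℂ) • ket N (n + 1) (p + 1)
    + (phiV j0 j1 j2 j3 j4 N n (p + 1) : ℂ) • ket N n (p + 1)
    + (phiA j0 j1 j2 j3 j4 N n (p + 1) : ℂ) • ket N (n - 1) (p + 1)
    + (phiH j0 j1 j2 j3 j4 N (n + 1) p : ℂ) • ket N (n + 1) p
    + (phi00R j0 j1 j2 j3 j4 n p : ℂ) • ket N n p
    + (phiH j0 j1 j2 j3 j4 N n p : ℂ) • ket N (n - 1) p
    + (phiA j0 j1 j2 j3 j4 N (n + 1) p : ℂ) • ket N (n + 1) (p - 1)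
    + (phiV j0 j1 j2 j3 j4 N n p : ℂ) • ket N n (p - 1)
    + (phiD j0 j1 j2 j3 j4 N n p : ℂ) • ket N (n - 1) (p - 1))

/-!
`C₁₂` and `C₁₂₃` are diagonal and their joint spectrum is simple, so interpolation on the spectrum
shows that an invariant subspace contains `|n,p⟩` as soon as it contains a vector with nonzero
`(n,p)` coordinate. The off-diagonal coefficients `ψ` of `C₂₃` and `ρ` of `C₃₄` do not vanish
inside the triangle, so every basis vector reaches each of its horizontal and vertical neighbours,
and hence all the others.
-/

section FinsuppInvariant

variable {ι : Type*}

/-- The algebra of functions `f : ι → R` whose associated diagonal operator `x ↦ f • x`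
(pointwise product) on `ι →₀ R` preserves the submodule `U`. -/
def multiplierAlgebra {R : Type*} [CommSemiring R] (U : Submodule R (ι →₀ R)) :
    Subalgebra R (ι → R) where
  carrier := {f | ∀ x ∈ U, f • x ∈ U}
  mul_mem' hf hg x hx := by
    rw [mul_smul]
    exact hf _ (hg x hx)
  add_mem' hf hg x hx := by
    rw [add_smul]
    exact U.add_mem (hf x hx) (hg x hx)
  algebraMap_mem' c x hx := by
    have smul_eq : (algebraMap R (ι → R) c) • x = c • x := by
      ext i
      simp
    rw [smul_eq]
    exact U.smul_mem c hx

theorem exists_mem_ne_zero_forall_eq_zero {R : Type*} [CommRing R] [IsDomain R]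
    {A : Subalgebra R (ι → R)} (hA : (A : Set (ι → R)).SeparatesPoints) {i : ι} {s : Finset ι}
    (hi : i ∉ s) : ∃ f ∈ A, f i ≠ 0 ∧ ∀ k ∈ s, f k = 0 := by
  have separate (k : ι) : ∃ f ∈ A, i ≠ k → f i ≠ f k := by
    by_cases hik : i = k
    · exact ⟨0, A.zero_mem, fun h => absurd hik h⟩
    · obtain ⟨f, hf, hne⟩ := hA hik
      exact ⟨f, hf, fun _ => hne⟩
  choose f hfA hf using separate
  refine ⟨∏ k ∈ s, (f k - algebraMap R (ι → R) (f k k)),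
    A.prod_mem fun k _ => A.sub_mem (hfA k) (A.algebraMap_mem _), ?_, fun k hk => ?_⟩
  · rw [Finset.prod_apply]
    exact Finset.prod_ne_zero_iff.mpr fun k hk =>
      sub_ne_zero.mpr (hf k (ne_of_mem_of_not_mem hk hi).symm)
  · rw [Finset.prod_apply]
    exact Finset.prod_eq_zero hk (sub_self _)

variable {K : Type*} [Field K] {U : Submodule K (ι →₀ K)}

theorem single_mem_of_separatesPoints
    (hU : (multiplierAlgebra U : Set (ι → K)).SeparatesPoints) {x : ι →₀ K} (hx : x ∈ U) {i : ι}
    (hxi : x i ≠ 0) : Finsupp.single i 1 ∈ U := by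
  classical
  obtain ⟨f, hfU, hfi, hf⟩ := exists_mem_ne_zero_forall_eq_zero hU (x.support.notMem_erase i)
  have smul_eq : f • x = Finsupp.single i (f i * x i) := by
    ext k
    rcases eq_or_ne k i with rfl | hki
    · simp
    · by_cases hxk : x k = 0
      · simp [hxk, hki]
      · simp [hf k (Finset.mem_erase.mpr ⟨hki, Finsupp.mem_support_iff.mpr hxk⟩), hki]
  have single_eq : Finsupp.single i 1 = (f i * x i)⁻¹ • f • x := by
    rw [smul_eq, Finsupp.smul_single, smul_eq_mul, inv_mul_cancel₀ (mul_ne_zero hfi hxi)]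
  rw [single_eq]
  exact U.smul_mem _ (hfU x hx)

/-- `HasTransition U i j` says that some endomorphism preserving `U` has a nonzero matrix entry
from the `i`-th to the `j`-th basis vector. -/
def HasTransition (U : Submodule K (ι →₀ K)) (i j : ι) : Prop :=
  ∃ T : Module.End K (ι →₀ K), U ∈ T.invtSubmodule ∧ T (Finsupp.single i 1) j ≠ 0

theorem eq_bot_or_eq_top_of_hasTransition
    (hU : (multiplierAlgebra U : Set (ι → K)).SeparatesPoints)
    (hconn : ∀ i j, Relation.ReflTransGen (HasTransition U) i j) : U = ⊥ ∨ U = ⊤ := by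
  refine or_iff_not_imp_left.mpr fun hbot => ?_
  obtain ⟨x, hxU, hx⟩ := U.ne_bot_iff.mp hbot
  obtain ⟨i, hxi⟩ := Finsupp.ne_iff.mp hx
  have single_mem (j : ι) : Finsupp.single j 1 ∈ U := by
    induction hconn i j with
    | refl => exact single_mem_of_separatesPoints hU hxU hxi
    | tail _ hjk hj =>
      obtain ⟨T, hTU, hT⟩ := hjk
      exact single_mem_of_separatesPoints hU (hTU hj) hT
  rw [eq_top_iff, ← Finsupp.basisSingleOne.span_eq, Submodule.span_le]
  rintro _ ⟨j, rfl⟩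
  simpa using single_mem j

end FinsuppInvariant

section Triangle

variable {N : ℕ}

theorem reflTransGen_of_horizontal_of_vertical {r : SN N → SN N → Prop} [Std.Symm r]
    (horizontal : ∀ a b : SN N, b.1 = (a.1.1 + 1, a.1.2) → r a b)
    (vertical : ∀ a b : SN N, b.1 = (a.1.1, a.1.2 + 1) → r a b) (a b : SN N) :
    Relation.ReflTransGen r a b := by
  have to_axis (n p : ℕ) (h : 0 ≤ (n : ℤ) ∧ 0 ≤ (p : ℤ) ∧ (n : ℤ) + p ≤ N) :
      Relation.ReflTransGen r ⟨(n, p), h⟩ ⟨(0, p), by omega⟩ := by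
    induction n with
    | zero => exact .refl
    | succ n ih =>
      exact .head (symm_of r (horizontal ⟨(n, p), by omega⟩ _ (by simp))) (ih (by omega))
  have to_origin (p : ℕ) (h : 0 ≤ (0 : ℤ) ∧ 0 ≤ (p : ℤ) ∧ (0 : ℤ) + p ≤ N) :
      Relation.ReflTransGen r ⟨(0, p), h⟩ ⟨(0, 0), by omega⟩ := by
    induction p with
    | zero => exact .refl
    | succ p ih =>
      exact .head (symm_of r (vertical ⟨(0, p), by omega⟩ _ (by simp))) (ih (by omega))
  have reaches_origin (q : SN N) : Relation.ReflTransGen r q ⟨(0, 0), by omega⟩ := by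
    obtain ⟨⟨n, p⟩, hn, hp, hnp⟩ := q
    lift n to ℕ using hn
    lift p to ℕ using hp
    exact (to_axis n p _).trans (to_origin p _)
  exact (reaches_origin a).trans (symm_of _ (reaches_origin b))

theorem ket_eq_single (q : SN N) : ket N q.1.1 q.1.2 = Finsupp.single q 1 :=
  dif_pos q.2

theorem ket_apply (n p : ℤ) (q : SN N) : ket N n p q = if q.1 = (n, p) then 1 else 0 := by
  by_cases h : 0 ≤ n ∧ 0 ≤ p ∧ n + p ≤ (N : ℤ)
  · simp [ket, h, Finsupp.single_apply, Subtype.ext_iff, eq_comm]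
  · have hq : q.1 ≠ (n, p) := fun hq => h (by simpa [hq] using q.2)
    simp [ket, h, hq]

theorem mkOp_single (f : ℤ → ℤ → FN N) (q : SN N) (c : ℂ) :
    mkOp N f (Finsupp.single q c) = c • f q.1.1 q.1.2 := by
  simp [mkOp]

theorem mkOp_smul_ket (d : ℤ → ℤ → ℂ) (x : FN N) :
    mkOp N (fun n p => d n p • ket N n p) x = (fun q : SN N => d q.1.1 q.1.2) • x := by
  ext r
  induction x using Finsupp.induction_linear with
  | zero => simp
  | add x y hx hy => simp_all [mul_add]
  | single q c =>
    rcases eq_or_ne r q with rfl | hrq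
    · simp [mkOp_single, ket_eq_single, mul_comm]
    · simp [mkOp_single, ket_eq_single, hrq]

end Triangle

section Coefficients

theorem muN_injOn (a b : ℝ) : Set.InjOn (muN a b) {n : ℤ | (n : ℝ) ≤ a + b} := by
  intro m hm n hn hmn
  rw [Set.mem_ofPred_eq] at hm hn
  have factored : ((m : ℝ) - n) * (m + n - 2 * a - 2 * b - 1) = 0 := by
    unfold muN at hmn
    linarith
  have second_ne : (m : ℝ) + n - 2 * a - 2 * b - 1 ≠ 0 := by linarith
  exact_mod_cast sub_eq_zero.mp ((mul_eq_zero.mp factored).resolve_right second_ne)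

theorem muP_injOn (a b : ℝ) : Set.InjOn (muP a b) {p : ℤ | (p : ℝ) ≤ a + b} :=
  muN_injOn a b

variable {j0 j1 j2 j3 j4 : ℝ} {N : ℕ}

theorem psiR_pos (hj1 : N ≤ 2 * j1) (hj2 : N ≤ 2 * j2) (hj04 : N ≤ j0 + j4) (hj3 : 0 ≤ j3)
    {n p : ℤ} (hn : 0 < n) (hp : 0 ≤ p) (hnp : n + p ≤ N) :
    0 < psiR j0 j1 j2 j3 j4 N n p := by
  have one_le : (1 : ℝ) ≤ n := by exact_mod_cast hn
  have p_nonneg : (0 : ℝ) ≤ p := by exact_mod_cast hp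
  have add_le : (n : ℝ) + p ≤ N := by exact_mod_cast hnp
  refine Real.sqrt_pos.mpr (div_pos ?_ ?_)
  · repeat' apply mul_pos
    all_goals linarith
  · refine mul_pos (mul_pos (pow_pos ?_ 2) ?_) ?_ <;> linarith

theorem rhoR_eq_psiR (n p : ℤ) :
    rhoR j0 j1 j2 j3 j4 N n p = psiR j1 j4 j0 j3 j2 N p n := by
  unfold rhoR psiR
  congr 2 <;> ring

theorem rhoR_pos (hj0 : N ≤ 2 * j0) (hj4 : N ≤ 2 * j4) (hj12 : N ≤ j1 + j2) (hj3 : 0 ≤ j3)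
    {n p : ℤ} (hn : 0 ≤ n) (hp : 0 < p) (hnp : n + p ≤ N) :
    0 < rhoR j0 j1 j2 j3 j4 N n p := by
  rw [rhoR_eq_psiR]
  exact psiR_pos hj4 hj0 hj12 hj3 hp hn (by rwa [add_comm])

end Coefficients

section Representation

variable {j0 j1 j2 j3 j4 : ℝ} {N : ℕ} {a b : SN N}

theorem opC23_single_apply_right (hab : b.1 = (a.1.1 + 1, a.1.2)) :
    opC23 j0 j1 j2 j3 j4 N (Finsupp.single a 1) b = psiR j0 j1 j2 j3 j4 N b.1.1 b.1.2 := by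
  have hne : a.1.1 + 1 ≠ a.1.1 - 1 := by omega
  simp [opC23, mkOp_single, ket_apply, hab, Prod.ext_iff, hne]

theorem opC23_single_apply_left (hab : b.1 = (a.1.1 + 1, a.1.2)) :
    opC23 j0 j1 j2 j3 j4 N (Finsupp.single b 1) a = psiR j0 j1 j2 j3 j4 N b.1.1 b.1.2 := by
  have hne : a.1.1 ≠ a.1.1 + 1 + 1 := by omega
  simp [opC23, mkOp_single, ket_apply, hab, Prod.ext_iff, hne]

theorem opC34_single_apply_up (hab : b.1 = (a.1.1, a.1.2 + 1)) :
    opC34 j0 j1 j2 j3 j4 N (Finsupp.single a 1) b = rhoR j0 j1 j2 j3 j4 N b.1.1 b.1.2 := by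
  have hne : a.1.2 + 1 ≠ a.1.2 - 1 := by omega
  simp [opC34, mkOp_single, ket_apply, hab, Prod.ext_iff, hne]

theorem opC34_single_apply_down (hab : b.1 = (a.1.1, a.1.2 + 1)) :
    opC34 j0 j1 j2 j3 j4 N (Finsupp.single b 1) a = rhoR j0 j1 j2 j3 j4 N b.1.1 b.1.2 := by
  have hne : a.1.2 ≠ a.1.2 + 1 + 1 := by omega
  simp [opC34, mkOp_single, ket_apply, hab, Prod.ext_iff, hne]

variable {U : Submodule ℂ (FN N)}

theorem separatesPoints_multiplierAlgebra (hj12 : N ≤ j1 + j2) (hj04 : N ≤ j0 + j4)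
    (h12 : U ∈ (opC12 j0 j1 j2 j3 j4 N).invtSubmodule)
    (h123 : U ∈ (opC123 j0 j1 j2 j3 j4 N).invtSubmodule) :
    (multiplierAlgebra U : Set (SN N → ℂ)).SeparatesPoints := by
  have muN_mem : (fun q : SN N => (muN j1 j2 q.1.1 : ℂ)) ∈ multiplierAlgebra U := fun x hx =>
    mkOp_smul_ket (fun n _ => (muN j1 j2 n : ℂ)) x ▸ h12 hx
  have muP_mem : (fun q : SN N => (muP j0 j4 q.1.2 : ℂ)) ∈ multiplierAlgebra U := fun x hx =>
    mkOp_smul_ket (fun _ p => (muP j0 j4 p : ℂ)) x ▸ h123 hx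
  have fst_le (q : SN N) : (q.1.1 : ℝ) ≤ N := by exact_mod_cast (by omega : q.1.1 ≤ (N : ℤ))
  have snd_le (q : SN N) : (q.1.2 : ℝ) ≤ N := by exact_mod_cast (by omega : q.1.2 ≤ (N : ℤ))
  intro q r hqr
  by_contra! not_separated
  have muN_eq : muN j1 j2 q.1.1 = muN j1 j2 r.1.1 := by
    exact_mod_cast not_separated _ muN_mem
  have muP_eq : muP j0 j4 q.1.2 = muP j0 j4 r.1.2 := by
    exact_mod_cast not_separated _ muP_mem
  exact hqr (Subtype.ext (Prod.ext
    (muN_injOn j1 j2 ((fst_le q).trans hj12) ((fst_le r).trans hj12) muN_eq)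
    (muP_injOn j0 j4 ((snd_le q).trans hj04) ((snd_le r).trans hj04) muP_eq)))

theorem reflTransGen_hasTransition (hj0 : N ≤ 2 * j0) (hj1 : N ≤ 2 * j1) (hj2 : N ≤ 2 * j2)
    (hj4 : N ≤ 2 * j4) (hj3 : 0 ≤ j3)
    (h23 : U ∈ (opC23 j0 j1 j2 j3 j4 N).invtSubmodule)
    (h34 : U ∈ (opC34 j0 j1 j2 j3 j4 N).invtSubmodule) (a b : SN N) :
    Relation.ReflTransGen (HasTransition U) a b := by
  have horizontal (a b : SN N) (hab : b.1 = (a.1.1 + 1, a.1.2)) :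
      HasTransition U a b ∧ HasTransition U b a := by
    have psi_ne : (psiR j0 j1 j2 j3 j4 N b.1.1 b.1.2 : ℂ) ≠ 0 := by
      have hfst : b.1.1 = a.1.1 + 1 := congrArg Prod.fst hab
      exact_mod_cast (psiR_pos hj1 hj2 (by linarith) hj3 (by omega) b.2.2.1 b.2.2.2).ne'
    exact ⟨⟨_, h23, by rwa [opC23_single_apply_right hab]⟩,
      ⟨_, h23, by rwa [opC23_single_apply_left hab]⟩⟩
  have vertical (a b : SN N) (hab : b.1 = (a.1.1, a.1.2 + 1)) :
      HasTransition U a b ∧ HasTransition U b a := by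
    have rho_ne : (rhoR j0 j1 j2 j3 j4 N b.1.1 b.1.2 : ℂ) ≠ 0 := by
      have hsnd : b.1.2 = a.1.2 + 1 := congrArg Prod.snd hab
      exact_mod_cast (rhoR_pos hj0 hj4 (by linarith) hj3 b.2.1 (by omega) b.2.2.2).ne'
    exact ⟨⟨_, h34, by rwa [opC34_single_apply_up hab]⟩,
      ⟨_, h34, by rwa [opC34_single_apply_down hab]⟩⟩
  have : Std.Symm fun a b => HasTransition U a b ∧ HasTransition U b a := ⟨fun _ _ => And.symm⟩
  exact Relation.ReflTransGen.mono (fun _ _ => And.left) a b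
    (reflTransGen_of_horizontal_of_vertical horizontal vertical a b)

end Representation

theorem stmt11_general (j0 j1 j2 j3 j4 : ℝ) (N : ℕ) (hNdef : (N : ℝ) = j1 + j2 - j3 + j4 + j0)
    (hj0 : N ≤ 2 * j0) (hj1 : N ≤ 2 * j1) (hj2 : N ≤ 2 * j2) (hj4 : N ≤ 2 * j4)
    (U : Submodule ℂ (FN N))
    (h12 : ∀ x ∈ U, opC12 j0 j1 j2 j3 j4 N x ∈ U)
    (h123 : ∀ x ∈ U, opC123 j0 j1 j2 j3 j4 N x ∈ U)
    (h23 : ∀ x ∈ U, opC23 j0 j1 j2 j3 j4 N x ∈ U)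
    (h34 : ∀ x ∈ U, opC34 j0 j1 j2 j3 j4 N x ∈ U) :
    U = ⊥ ∨ U = ⊤ := by
  have hj3 : 0 ≤ j3 := by linarith [N.cast_nonneg (α := ℝ)]
  exact eq_bot_or_eq_top_of_hasTransition
    (separatesPoints_multiplierAlgebra (by linarith) (by linarith) h12 h123)
    (reflTransGen_hasTransition hj0 hj1 hj2 hj4 hj3 h23 h34)

/-- Irreducibility of the finite-dimensional symmetric representation of `sR(4)` on
`𝓕_N`: the only subspaces invariant under `C₁₂`, `C₁₂₃`, `C₂₃`, `C₃₄`, `C₂₃₄` are `{0}`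
and `𝓕_N`. -/
theorem stmt11 (j0 j1 j2 j3 j4 : ℝ) (N : ℕ)
    (h12 : j1 ≥ j2) (h24 : j2 ≥ j4) (h04 : j0 ≥ j4)
    (h0 : j0 ≥ 0) (h1 : j1 ≥ 0) (h2 : j2 ≥ 0) (h3 : j3 ≥ 0) (h4 : j4 ≥ 0)
    (hup : j1 + j2 + j0 + j4 ≥ j3) (hlow : j3 ≥ j1 + j2 + j0 - j4)
    (hN : 0 < N) (hNdef : (N : ℝ) = j1 + j2 - j3 + j4 + j0) :
    ∀ U : Submodule ℂ (FN N),
      (∀ x ∈ U, opC12 j0 j1 j2 j3 j4 N x ∈ U) →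
      (∀ x ∈ U, opC123 j0 j1 j2 j3 j4 N x ∈ U) →
      (∀ x ∈ U, opC23 j0 j1 j2 j3 j4 N x ∈ U) →
      (∀ x ∈ U, opC34 j0 j1 j2 j3 j4 N x ∈ U) →
      (∀ x ∈ U, opC234 j0 j1 j2 j3 j4 N x ∈ U) →
      U = ⊥ ∨ U = ⊤ := by
  intro U h12inv h123inv h23inv h34inv _
  exact stmt11_general j0 j1 j2 j3 j4 N hNdef (by linarith) (by linarith) (by linarith)
    (by linarith) U h12inv h123inv h23inv h34inv
end
end

section
/- Let j⁽⁰⁾,…,j⁽⁴⁾ be reals satisfying j⁽¹⁾ ≥ j⁽²⁾ ≥ j⁽⁴⁾ ≥ 0, j⁽⁰⁾ ≥ j⁽⁴⁾, j⁽ⁱ⁾ ≥ 0 for all i, j⁽¹⁾+j⁽²⁾+j⁽⁰⁾+j⁽⁴⁾ ≥ j⁽³⁾ ≥ j⁽¹⁾+j⁽²⁾+j⁽⁰⁾−j⁽⁴⁾, with N := j⁽¹⁾+j⁽²⁾−j⁽³⁾+j⁽⁴⁾+j⁽⁰⁾ a positive integer. Then: (a) for all integers n ≥ 1, p ≥ 0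 with n+p ≤ N, every factor of the expression n(2j⁽¹⁾+1−n)(2j⁽²⁾+1−n)(2j⁽¹⁾+2j⁽²⁾+2−n)(N−n−p+2j⁽³⁾+2)(N−n−p+1)(p−n−N+2j⁽¹⁾+2j⁽²⁾+1)(n−p−N+2j⁽⁰⁾+2j⁽⁴⁾) / ((2j⁽¹⁾+2j⁽²⁾+2−2n)²(2j⁽¹⁾+2j⁽²⁾+1−2n)(2j⁽¹⁾+2j⁽²⁾+3−2n)) is strictly positive, hence the expression itself is strictly positive; (b) for all integers n ≥ 0, p ≥ 1 with n+p ≤ N, every factor of p(2j⁽⁴⁾+1−p)(2j⁽⁰⁾+1−p)(2j⁽⁴⁾+2j⁽⁰⁾+2−p)(N−n−p+2j⁽³⁾+2)(N−n−p+1)(p−n−N+2j⁽¹⁾+2j⁽²⁾)(n−p−N+2j⁽⁰⁾+2j⁽⁴⁾+1) / ((2j⁽⁰⁾+2j⁽⁴⁾+2−2p)²(2j⁽⁰⁾+2j⁽⁴⁾+1−2p)(2j⁽⁰⁾+2j⁽⁴⁾+3−2p)) is strictly positive, hence the expression itself is strictly positive. -/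
noncomputable section

/-!
Since `N = j1 + j2 - j3 + j4 + j0`, the lower bound on `j3` says exactly that `N ≤ 2 * j4`. As `j4`
is the smallest of `j0`, `j1`, `j2`, `j4`, this gives `N ≤ 2 * j` for each of the four, and every
factor is then positive by linear arithmetic in `n` and `p`. Exchanging `(j1, j2, n)` with
`(j4, j0, p)` carries `ψ²` to `ρ²`, so only the factors of `ψ²` have to be examined.
-/

namespace SpecialRacah

variable {K : Type*} [Field K]

/-- The square `ψ_{n,p}²` of the off-diagonal entry of the generator `C₂₃`, with `n`, `p` and `N`
ranging over the whole field. -/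
def psiSq (j0 j1 j2 j3 j4 N n p : K) : K :=
  n * (2 * j1 + 1 - n) * (2 * j2 + 1 - n) * (2 * j1 + 2 * j2 + 2 - n) *
      (N - n - p + 2 * j3 + 2) * (N - n - p + 1) *
      (p - n - N + 2 * j1 + 2 * j2 + 1) * (n - p - N + 2 * j0 + 2 * j4) /
    ((2 * j1 + 2 * j2 + 2 - 2 * n) ^ 2 * (2 * j1 + 2 * j2 + 1 - 2 * n) *
      (2 * j1 + 2 * j2 + 3 - 2 * n))

/-- The square `ρ_{n,p}²` of the off-diagonal entry of the generator `C₃₄`, with `n`, `p` and `N`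
ranging over the whole field. -/
def rhoSq (j0 j1 j2 j3 j4 N n p : K) : K :=
  p * (2 * j4 + 1 - p) * (2 * j0 + 1 - p) * (2 * j4 + 2 * j0 + 2 - p) *
      (N - n - p + 2 * j3 + 2) * (N - n - p + 1) *
      (p - n - N + 2 * j1 + 2 * j2) * (n - p - N + 2 * j0 + 2 * j4 + 1) /
    ((2 * j0 + 2 * j4 + 2 - 2 * p) ^ 2 * (2 * j0 + 2 * j4 + 1 - 2 * p) *
      (2 * j0 + 2 * j4 + 3 - 2 * p))

theorem rhoSq_eq_psiSq_swap (j0 j1 j2 j3 j4 N n p : K) :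
    rhoSq j0 j1 j2 j3 j4 N n p = psiSq j2 j4 j0 j3 j1 N p n := by
  unfold rhoSq psiSq
  congr 1 <;> ring

variable [LinearOrder K]

/-- Positivity of each factor of the numerator and denominator of `psiSq`, in the order in which
they occur there. -/
def PsiFactorsPos (j0 j1 j2 j3 j4 N n p : K) : Prop :=
  0 < n ∧
  0 < 2 * j1 + 1 - n ∧
  0 < 2 * j2 + 1 - n ∧
  0 < 2 * j1 + 2 * j2 + 2 - n ∧
  0 < N - n - p + 2 * j3 + 2 ∧
  0 < N - n - p + 1 ∧
  0 < p - n - N + 2 * j1 + 2 * j2 + 1 ∧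
  0 < n - p - N + 2 * j0 + 2 * j4 ∧
  0 < (2 * j1 + 2 * j2 + 2 - 2 * n) ^ 2 ∧
  0 < 2 * j1 + 2 * j2 + 1 - 2 * n ∧
  0 < 2 * j1 + 2 * j2 + 3 - 2 * n

/-- Positivity of each factor of the numerator and denominator of `rhoSq`, in the order in which
they occur there. -/
def RhoFactorsPos (j0 j1 j2 j3 j4 N n p : K) : Prop :=
  0 < p ∧
  0 < 2 * j4 + 1 - p ∧
  0 < 2 * j0 + 1 - p ∧
  0 < 2 * j4 + 2 * j0 + 2 - p ∧
  0 < N - n - p + 2 * j3 + 2 ∧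
  0 < N - n - p + 1 ∧
  0 < p - n - N + 2 * j1 + 2 * j2 ∧
  0 < n - p - N + 2 * j0 + 2 * j4 + 1 ∧
  0 < (2 * j0 + 2 * j4 + 2 - 2 * p) ^ 2 ∧
  0 < 2 * j0 + 2 * j4 + 1 - 2 * p ∧
  0 < 2 * j0 + 2 * j4 + 3 - 2 * p

theorem rhoFactorsPos_iff_psiFactorsPos_swap (j0 j1 j2 j3 j4 N n p : K) :
    RhoFactorsPos j0 j1 j2 j3 j4 N n p ↔ PsiFactorsPos j2 j4 j0 j3 j1 N p n := by
  rw [RhoFactorsPos, PsiFactorsPos, add_comm (2 * j0) (2 * j4), sub_right_comm N n p,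
    add_right_comm (n - p - N) (2 * j0) (2 * j4), add_right_comm (p - n - N) (2 * j1) (2 * j2)]
  tauto

variable [IsStrictOrderedRing K] {j0 j1 j2 j3 j4 N n p : K}

theorem PsiFactorsPos.psiSq_pos (h : PsiFactorsPos j0 j1 j2 j3 j4 N n p) :
    0 < psiSq j0 j1 j2 j3 j4 N n p := by
  obtain ⟨_, _, _, _, _, _, _, _, _, _, _⟩ := h
  unfold psiSq
  positivity

theorem RhoFactorsPos.rhoSq_pos (h : RhoFactorsPos j0 j1 j2 j3 j4 N n p) :
    0 < rhoSq j0 j1 j2 j3 j4 N n p := by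
  rw [rhoSq_eq_psiSq_swap]
  exact ((rhoFactorsPos_iff_psiFactorsPos_swap ..).mp h).psiSq_pos

theorem psiFactorsPos_of_le (h1 : N ≤ 2 * j1) (h2 : N ≤ 2 * j2) (h04 : N ≤ j0 + j4)
    (h3 : 0 ≤ j3) (hn : 0 < n) (hp : 0 ≤ p) (hnp : n + p ≤ N) :
    PsiFactorsPos j0 j1 j2 j3 j4 N n p := by
  have hbase : 0 < 2 * j1 + 2 * j2 + 2 - 2 * n := by linarith
  refine ⟨hn, ?_, ?_, ?_, ?_, ?_, ?_, ?_, pow_pos hbase 2, ?_, ?_⟩ <;> linarith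

theorem rhoFactorsPos_of_le (h4 : N ≤ 2 * j4) (h0 : N ≤ 2 * j0) (h12 : N ≤ j1 + j2)
    (h3 : 0 ≤ j3) (hn : 0 ≤ n) (hp : 0 < p) (hnp : n + p ≤ N) :
    RhoFactorsPos j0 j1 j2 j3 j4 N n p :=
  (rhoFactorsPos_iff_psiFactorsPos_swap ..).mpr <|
    psiFactorsPos_of_le h4 h0 (by rwa [add_comm]) h3 hp hn (by rwa [add_comm])

end SpecialRacah

open SpecialRacah in
theorem stmt12_general {K : Type*} [Field K] [LinearOrder K] [IsStrictOrderedRing K]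
    {j0 j1 j2 j3 j4 N : K} (h04 : j4 ≤ j0) (h14 : j4 ≤ j1) (h24 : j4 ≤ j2)
    (hlow : j1 + j2 + j0 - j4 ≤ j3) (hNdef : N = j1 + j2 - j3 + j4 + j0) :
    (∀ n p : K, 0 < n → 0 ≤ p → n + p ≤ N →
      PsiFactorsPos j0 j1 j2 j3 j4 N n p ∧ 0 < psiSq j0 j1 j2 j3 j4 N n p) ∧
    (∀ n p : K, 0 ≤ n → 0 < p → n + p ≤ N →
      RhoFactorsPos j0 j1 j2 j3 j4 N n p ∧ 0 < rhoSq j0 j1 j2 j3 j4 N n p) := by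
  have hN4 : N ≤ 2 * j4 := by linarith
  have hN0 : N ≤ 2 * j0 := by linarith
  have hN1 : N ≤ 2 * j1 := by linarith
  have hN2 : N ≤ 2 * j2 := by linarith
  have hN04 : N ≤ j0 + j4 := by linarith
  have hN12 : N ≤ j1 + j2 := by linarith
  have hN3 : N ≤ j3 := by linarith
  constructor
  · intro n p hn hp hnp
    have hj3 : 0 ≤ j3 := ((add_pos_of_pos_of_nonneg hn hp).le.trans hnp).trans hN3
    have hfactors := psiFactorsPos_of_le hN1 hN2 hN04 hj3 hn hp hnp
    exact ⟨hfactors, hfactors.psiSq_pos⟩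
  · intro n p hn hp hnp
    have hj3 : 0 ≤ j3 := ((add_pos_of_nonneg_of_pos hn hp).le.trans hnp).trans hN3
    have hfactors := rhoFactorsPos_of_le hN4 hN0 hN12 hj3 hn hp hnp
    exact ⟨hfactors, hfactors.rhoSq_pos⟩

theorem stmt12 (j0 j1 j2 j3 j4 : ℝ) (N : ℤ)
    (h12 : j1 ≥ j2) (h24 : j2 ≥ j4) (h04 : j0 ≥ j4)
    (h0 : j0 ≥ 0) (h1 : j1 ≥ 0) (h2 : j2 ≥ 0) (h3 : j3 ≥ 0) (h4 : j4 ≥ 0)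
    (hup : j1 + j2 + j0 + j4 ≥ j3) (hlow : j3 ≥ j1 + j2 + j0 - j4)
    (hN : 0 < N) (hNdef : (N : ℝ) = j1 + j2 - j3 + j4 + j0) :
    (∀ n p : ℤ, 1 ≤ n → 0 ≤ p → n + p ≤ N →
      (0 < (n : ℝ) ∧
       0 < 2 * j1 + 1 - (n : ℝ) ∧
       0 < 2 * j2 + 1 - (n : ℝ) ∧
       0 < 2 * j1 + 2 * j2 + 2 - (n : ℝ) ∧
       0 < (N : ℝ) - n - p + 2 * j3 + 2 ∧
       0 < (N : ℝ) - n - p + 1 ∧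
       0 < (p : ℝ) - n - N + 2 * j1 + 2 * j2 + 1 ∧
       0 < (n : ℝ) - p - N + 2 * j0 + 2 * j4 ∧
       0 < (2 * j1 + 2 * j2 + 2 - 2 * (n : ℝ)) ^ 2 ∧
       0 < 2 * j1 + 2 * j2 + 1 - 2 * (n : ℝ) ∧
       0 < 2 * j1 + 2 * j2 + 3 - 2 * (n : ℝ)) ∧
      0 < (n : ℝ) * (2 * j1 + 1 - n) * (2 * j2 + 1 - n) * (2 * j1 + 2 * j2 + 2 - n) *
            ((N : ℝ) - n - p + 2 * j3 + 2) * ((N : ℝ) - n - p + 1) *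
            ((p : ℝ) - n - N + 2 * j1 + 2 * j2 + 1) * ((n : ℝ) - p - N + 2 * j0 + 2 * j4) /
          ((2 * j1 + 2 * j2 + 2 - 2 * (n : ℝ)) ^ 2 * (2 * j1 + 2 * j2 + 1 - 2 * (n : ℝ)) *
            (2 * j1 + 2 * j2 + 3 - 2 * (n : ℝ)))) ∧
    (∀ n p : ℤ, 0 ≤ n → 1 ≤ p → n + p ≤ N →
      (0 < (p : ℝ) ∧
       0 < 2 * j4 + 1 - (p : ℝ) ∧
       0 < 2 * j0 + 1 - (p : ℝ) ∧
       0 < 2 * j4 + 2 * j0 + 2 - (p : ℝ) ∧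
       0 < (N : ℝ) - n - p + 2 * j3 + 2 ∧
       0 < (N : ℝ) - n - p + 1 ∧
       0 < (p : ℝ) - n - N + 2 * j1 + 2 * j2 ∧
       0 < (n : ℝ) - p - N + 2 * j0 + 2 * j4 + 1 ∧
       0 < (2 * j0 + 2 * j4 + 2 - 2 * (p : ℝ)) ^ 2 ∧
       0 < 2 * j0 + 2 * j4 + 1 - 2 * (p : ℝ) ∧
       0 < 2 * j0 + 2 * j4 + 3 - 2 * (p : ℝ)) ∧
      0 < (p : ℝ) * (2 * j4 + 1 - p) * (2 * j0 + 1 - p) * (2 * j4 + 2 * j0 + 2 - p) *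
            ((N : ℝ) - n - p + 2 * j3 + 2) * ((N : ℝ) - n - p + 1) *
            ((p : ℝ) - n - N + 2 * j1 + 2 * j2) * ((n : ℝ) - p - N + 2 * j0 + 2 * j4 + 1) /
          ((2 * j0 + 2 * j4 + 2 - 2 * (p : ℝ)) ^ 2 * (2 * j0 + 2 * j4 + 1 - 2 * (p : ℝ)) *
            (2 * j0 + 2 * j4 + 3 - 2 * (p : ℝ)))) := by
  obtain ⟨hpsi, hrho⟩ := stmt12_general h04 (h24.trans h12) h24 hlow hNdef
  exact ⟨fun n p hn hp hnp ↦ hpsi n p (by exact_mod_cast hn) (by exact_mod_cast hp)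
      (by exact_mod_cast hnp),
    fun n p hn hp hnp ↦ hrho n p (by exact_mod_cast hn) (by exact_mod_cast hp)
      (by exact_mod_cast hnp)⟩
end
end

section
/- Let 𝒩 be a positive integer and α, β, δ real parameters such that all denominators appearing below are nonzero (i.e. (α+1)_k ≠ 0 and (β+δ+1)_k ≠ 0 for 0 ≤ k ≤ 𝒩+1, and 2n+α+β+j ≠ 0 for 0 ≤ n ≤ 𝒩 and j ∈ {0,1,2}). Write r̃_n(m) := r_n(m; α, β, −𝒩−2, δ+1) (the Racah function on the grid of size 𝒩+1), with the convention r̃_{−1} := 0. Define λ̃(m) := (m+1+δ)(𝒩−m+1)(β+δ+1)/(𝒩+1), E_n := (n+2+β+δ)(n+α+1)(n+β+δ+1)(n+α+β+1)/((2n+α+β+1)(2n+α+β+2)), G_n := n(n−1+α−δ)(n+α−δ)(n+β)/((2n+α+β)(2n+α+β+1)), and F_n := −E_n − G_n + (δ+1)(β+δ+1). Then for all integers 0 ≤ n ≤ 𝒩 and 0 ≤ m ≤ 𝒩: λ̃(m)·r_n(m; α, β, −𝒩−1, δ) = E_n·r̃_{n+1}(m) + F_n·r̃_n(m) + G_n·r̃_{n−1}(m).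 -/
noncomputable section

open Finset Real

/-- Pochhammer symbol `(y)_k = y(y+1)⋯(y+k−1)` for real `y`. -/
def poch (y : ℝ) (k : ℕ) : ℝ := ∏ i ∈ Finset.range k, (y + i)

/-- The terminating Racah function `r_n(m; α, β, −𝒩−1, δ)` on the grid `{0,…,𝒩}`:
`r_n(m) = ∑_{k=0}^{n} (−n)_k (n+α+β+1)_k (−m)_k (m−𝒩+δ)_k /
  ((α+1)_k (β+δ+1)_k (−𝒩)_k k!)`. -/
def racah (𝒩 : ℕ) (α β δ : ℝ) (n m : ℕ) : ℝ :=
  ∑ k ∈ Finset.range (n + 1),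
    (poch (-(n : ℝ)) k * poch ((n : ℝ) + α + β + 1) k * poch (-(m : ℝ)) k *
        poch ((m : ℝ) - (𝒩 : ℝ) + δ) k) /
      (poch (α + 1) k * poch (β + δ + 1) k * poch (-(𝒩 : ℝ)) k * (Nat.factorial k : ℝ))

/-- `λ̃(m) = (m+1+δ)(𝒩−m+1)(β+δ+1)/(𝒩+1)`. -/
def lamTilde (𝒩 : ℕ) (β δ : ℝ) (m : ℕ) : ℝ :=
  ((m : ℝ) + 1 + δ) * ((𝒩 : ℝ) - (m : ℝ) + 1) * (β + δ + 1) / ((𝒩 : ℝ) + 1)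

/-- `E_n = (n+2+β+δ)(n+α+1)(n+β+δ+1)(n+α+β+1)/((2n+α+β+1)(2n+α+β+2))`. -/
def coeffE (α β δ : ℝ) (n : ℕ) : ℝ :=
  ((n : ℝ) + 2 + β + δ) * ((n : ℝ) + α + 1) * ((n : ℝ) + β + δ + 1) * ((n : ℝ) + α + β + 1) /
    ((2 * (n : ℝ) + α + β + 1) * (2 * (n : ℝ) + α + β + 2))

/-- `G_n = n(n−1+α−δ)(n+α−δ)(n+β)/((2n+α+β)(2n+α+β+1))`. -/
def coeffG (α β δ : ℝ) (n : ℕ) : ℝ :=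
  (n : ℝ) * ((n : ℝ) - 1 + α - δ) * ((n : ℝ) + α - δ) * ((n : ℝ) + β) /
    ((2 * (n : ℝ) + α + β) * (2 * (n : ℝ) + α + β + 1))

/-- `F_n = −E_n − G_n + (δ+1)(β+δ+1)`. -/
def coeffF (α β δ : ℝ) (n : ℕ) : ℝ :=
  -coeffE α β δ n - coeffG α β δ n + (δ + 1) * (β + δ + 1)

/-!
Write `L_k(x) = (-x)_k (x+c)_k`. The Racah function is `∑ k, L_k(n) L_k(x) / D_k`, with
`c = α + β + 1` in the degree factor and `c = γ + δ + 1` in the grid factor. Replacing `(γ, δ)` by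
`(γ - 1, δ + 1)` leaves `γ + δ + 1` unchanged, so both sides of the relation expand in the same
functions `L_k(x)` of the grid variable, and it suffices to compare coefficients.

On the left, `(x + 1 + δ)(-γ - x) L_k(x) = L_{k+1}(x) + (k + 1 + δ)(-γ - k) L_k(x)`. On the right,
`F_n = -E_n - G_n + (δ + 1)(β + δ + 1)` turns the combination of `L_{k+1}(n + 1)`, `L_{k+1}(n)` and
`L_{k+1}(n - 1)` into first differences in `n`, and these are multiples of `L_k(n)`.
-/

theorem poch_zero (y : ℝ) : poch y 0 = 1 :=
  Finset.prod_range_zero _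

theorem poch_succ (y : ℝ) (k : ℕ) : poch y (k + 1) = poch y k * (y + k) :=
  Finset.prod_range_succ _ k

theorem poch_succ_left (y : ℝ) (k : ℕ) : poch y (k + 1) = y * poch (y + 1) k := by
  simp only [poch, Finset.prod_range_succ', Nat.cast_add, Nat.cast_one, Nat.cast_zero, add_zero,
    add_assoc, add_comm (1 : ℝ), mul_comm y]

theorem poch_ne_zero_iff {y : ℝ} {k : ℕ} : poch y k ≠ 0 ↔ ∀ i < k, y + i ≠ 0 := by
  simp only [poch, Finset.prod_ne_zero_iff, Finset.mem_range]

theorem poch_ne_zero_of_le {y : ℝ} {j k : ℕ} (hjk : j ≤ k) (h : poch y k ≠ 0) : poch y j ≠ 0 :=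
  poch_ne_zero_iff.2 fun i hi => poch_ne_zero_iff.1 h i (hi.trans_le hjk)

theorem poch_neg_natCast_ne_zero_iff {n k : ℕ} : poch (-(n : ℝ)) k ≠ 0 ↔ k ≤ n := by
  rw [poch_ne_zero_iff]
  refine ⟨fun h => ?_, fun hkn i hi => ?_⟩
  · by_contra! hnk
    exact h n hnk (neg_add_cancel _)
  · rw [neg_add_eq_sub, sub_ne_zero]
    exact mod_cast (hi.trans_le hkn).ne

/-- The product `(-x)_k (x+c)_k`, a polynomial of degree `k` in the quadratic lattice `x(x+c)`
vanishing at `x = 0, …, k - 1`. It serves both as the degree factor of the Racah function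
(`x = n`, `c = α + β + 1`) and as its grid factor (`x = m`, `c = γ + δ + 1`). -/
def latticePoch (x c : ℝ) (k : ℕ) : ℝ := poch (-x) k * poch (x + c) k

theorem latticePoch_zero (x c : ℝ) : latticePoch x c 0 = 1 := by
  rw [latticePoch, poch_zero, poch_zero, mul_one]

theorem latticePoch_succ (x c : ℝ) (k : ℕ) :
    latticePoch x c (k + 1) = latticePoch x c k * ((k - x) * (x + c + k)) := by
  simp only [latticePoch, poch_succ]
  ring

theorem latticePoch_natCast_eq_zero {n k : ℕ} (h : n < k) (c : ℝ) : latticePoch n c k = 0 := by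
  have hpoch : poch (-(n : ℝ)) k = 0 := by
    simpa only [not_not] using mt poch_neg_natCast_ne_zero_iff.1 h.not_ge
  rw [latticePoch, hpoch, zero_mul]

theorem latticePoch_reflect (x c : ℝ) (k : ℕ) :
    latticePoch (-x - c) c k = latticePoch x c k := by
  rw [latticePoch, latticePoch, mul_comm, sub_add_cancel, neg_sub, sub_neg_eq_add, add_comm c]

theorem mul_latticePoch_forward_difference (x c : ℝ) (k : ℕ) :
    (x + c) * (latticePoch (x + 1) c (k + 1) - latticePoch x c (k + 1)) =
      -(k + 1) * (2 * x + c + 1) * (x + c + k) * latticePoch x c k := by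
  have lower_shift : poch (-(x + 1)) (k + 1) = -(x + 1) * poch (-x) k := by
    rw [poch_succ_left, neg_add, neg_add_cancel_right]
  have upper_shift : (x + c) * poch (x + 1 + c) k = poch (x + c) k * (x + c + k) := by
    rw [← poch_succ, poch_succ_left, add_right_comm]
  simp only [latticePoch, lower_shift, poch_succ]
  linear_combination (-(x + 1) * (x + 1 + c + k) * poch (-x) k) * upper_shift

theorem mul_latticePoch_backward_difference (x c : ℝ) (k : ℕ) :
    x * (latticePoch x c (k + 1) - latticePoch (x - 1) c (k + 1)) =
      -(k + 1) * (2 * x + c - 1) * (x - k) * latticePoch x c k := by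
  have forward := mul_latticePoch_forward_difference (-x - c) c k
  rw [show -x - c + 1 = -(x - 1) - c by ring] at forward
  simp only [latticePoch_reflect] at forward
  linear_combination forward

theorem mul_latticePoch_eq_succ_add (x γ δ : ℝ) (k : ℕ) :
    (x + 1 + δ) * (-γ - x) * latticePoch x (γ + δ + 1) k =
      latticePoch x (γ + δ + 1) (k + 1)
        + (k + 1 + δ) * (-γ - k) * latticePoch x (γ + δ + 1) k := by
  rw [latticePoch_succ]
  ring

theorem mul_coeffE_mul_latticePoch_difference {α β : ℝ} (δ : ℝ) {n : ℕ} (k : ℕ)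
    (h₁ : 2 * (n : ℝ) + α + β + 1 ≠ 0) (h₂ : 2 * (n : ℝ) + α + β + 2 ≠ 0) :
    (2 * n + α + β + 1) * (coeffE α β δ n
        * (latticePoch (n + 1) (α + β + 1) (k + 1) - latticePoch n (α + β + 1) (k + 1))) =
      -(k + 1) * (n + 2 + β + δ) * (n + α + 1) * (n + β + δ + 1) * (n + α + β + 1 + k)
        * latticePoch n (α + β + 1) k := by
  have difference := mul_latticePoch_forward_difference n (α + β + 1) k
  have coeff_mul_den := div_mul_cancel₀
    (((n : ℝ) + 2 + β + δ) * (n + α + 1) * (n + β + δ + 1) * (n + α + β + 1))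
    (mul_ne_zero h₁ h₂)
  rw [← coeffE] at coeff_mul_den
  apply mul_left_cancel₀ h₂
  linear_combination
    (latticePoch (n + 1) (α + β + 1) (k + 1) - latticePoch n (α + β + 1) (k + 1)) * coeff_mul_den
      + (n + 2 + β + δ) * (n + α + 1) * (n + β + δ + 1) * difference

theorem mul_coeffG_mul_latticePoch_difference {α β : ℝ} (δ : ℝ) {n : ℕ} (k : ℕ)
    (h₀ : 2 * (n : ℝ) + α + β ≠ 0) (h₁ : 2 * (n : ℝ) + α + β + 1 ≠ 0) :
    (2 * n + α + β + 1) * (coeffG α β δ n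
        * (latticePoch n (α + β + 1) (k + 1) - latticePoch (n - 1) (α + β + 1) (k + 1))) =
      -(k + 1) * (n - 1 + α - δ) * (n + α - δ) * (n + β) * (n - k)
        * latticePoch n (α + β + 1) k := by
  have difference := mul_latticePoch_backward_difference n (α + β + 1) k
  have coeff_mul_den := div_mul_cancel₀
    ((n : ℝ) * (n - 1 + α - δ) * (n + α - δ) * (n + β)) (mul_ne_zero h₀ h₁)
  rw [← coeffG] at coeff_mul_den
  apply mul_left_cancel₀ h₀
  linear_combination
    (latticePoch n (α + β + 1) (k + 1) - latticePoch (n - 1) (α + β + 1) (k + 1)) * coeff_mul_den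
      + (n - 1 + α - δ) * (n + α - δ) * (n + β) * difference

theorem coeff_combination_latticePoch_succ {α β : ℝ} (δ : ℝ) {n : ℕ} (k : ℕ)
    (hαβ : ∀ j : ℕ, j ≤ 2 → 2 * (n : ℝ) + α + β + j ≠ 0) :
    coeffE α β δ n * latticePoch (n + 1) (α + β + 1) (k + 1)
        + coeffF α β δ n * latticePoch n (α + β + 1) (k + 1)
        + coeffG α β δ n * latticePoch (n - 1) (α + β + 1) (k + 1) =
      (β + δ + 2 + k) * ((k + 2 + δ) * latticePoch n (α + β + 1) (k + 1)
        - (k + 1) * (α + 1 + k) * (β + δ + 1 + k) * latticePoch n (α + β + 1) k) := by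
  have h₀ : 2 * (n : ℝ) + α + β ≠ 0 := by simpa using hαβ 0 (by norm_num)
  have h₁ : 2 * (n : ℝ) + α + β + 1 ≠ 0 := by simpa using hαβ 1 (by norm_num)
  have h₂ : 2 * (n : ℝ) + α + β + 2 ≠ 0 := by simpa using hαβ 2 le_rfl
  apply mul_left_cancel₀ h₁
  rw [coeffF]
  linear_combination mul_coeffE_mul_latticePoch_difference δ k h₁ h₂
    - mul_coeffG_mul_latticePoch_difference δ k h₀ h₁
    + ((2 * n + α + β + 1) * ((δ + 1) * (β + δ + 1) - (β + δ + 2 + k) * (k + 2 + δ)))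
      * latticePoch_succ n (α + β + 1) k

/-- The `k`-th denominator of the Racah function with parameters `α, β, γ, δ`. -/
def racahDen (α β γ δ : ℝ) (k : ℕ) : ℝ :=
  poch (α + 1) k * poch (β + δ + 1) k * poch (γ + 1) k * (Nat.factorial k : ℝ)

theorem racahDen_zero (α β γ δ : ℝ) : racahDen α β γ δ 0 = 1 := by
  simp only [racahDen, poch_zero, Nat.factorial_zero, Nat.cast_one, mul_one]

theorem racahDen_succ (α β γ δ : ℝ) (k : ℕ) :
    racahDen α β γ δ (k + 1) = racahDen α β γ δ k
      * ((k + 1) * (α + 1 + k) * (β + δ + 1 + k) * (γ + 1 + k)) := by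
  simp only [racahDen, poch_succ, Nat.factorial_succ, Nat.cast_mul, Nat.cast_succ]
  ring

theorem mul_racahDen_shift_succ (α β γ δ : ℝ) (k : ℕ) :
    (β + δ + 1) * racahDen α β (γ - 1) (δ + 1) (k + 1) =
      γ * racahDen α β γ δ k
        * ((k + 1) * (α + 1 + k) * (β + δ + 1 + k) * (β + δ + 2 + k)) := by
  have hβδ : (β + δ + 1) * poch (β + (δ + 1) + 1) (k + 1) =
      poch (β + δ + 1) k * (β + δ + 1 + k) * (β + δ + 2 + k) := by
    rw [← add_assoc β δ 1, ← poch_succ_left, poch_succ, poch_succ, Nat.cast_succ]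
    ring
  have hγ : poch (γ - 1 + 1) (k + 1) = γ * poch (γ + 1) k := by
    rw [sub_add_cancel, poch_succ_left]
  simp only [racahDen, hγ, poch_succ (α + 1), Nat.factorial_succ, Nat.cast_mul, Nat.cast_succ]
  linear_combination
    (poch (α + 1) k * (α + 1 + k) * γ * poch (γ + 1) k * (k + 1) * (k.factorial : ℝ)) * hβδ

theorem div_racahDen_add_eq_div_racahDen_shift {α β γ δ u v : ℝ} {k : ℕ}
    (hα : poch (α + 1) (k + 1) ≠ 0) (hβδ : poch (β + δ + 1) (k + 2) ≠ 0)
    (hγ : poch γ (k + 1) ≠ 0) (hv : v = 0 ∨ γ + 1 + k ≠ 0) :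
    (β + δ + 1) / -γ * (u / racahDen α β γ δ k
        + (k + 2 + δ) * (-γ - (k + 1)) * (v / racahDen α β γ δ (k + 1))) =
      (β + δ + 2 + k) * ((k + 2 + δ) * v - (k + 1) * (α + 1 + k) * (β + δ + 1 + k) * u)
        / racahDen α β (γ - 1) (δ + 1) (k + 1) := by
  have hβδ₀ : β + δ + 1 ≠ 0 := by simpa using poch_ne_zero_iff.1 hβδ 0 (by omega)
  have hβδ₂ : β + δ + 2 + k ≠ 0 := by
    have := poch_ne_zero_iff.1 hβδ (k + 1) (by omega)
    rwa [Nat.cast_succ, show β + δ + 1 + ((k : ℝ) + 1) = β + δ + 2 + k by ring] at this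
  have hβδ_succ := poch_ne_zero_of_le (k + 1).le_succ hβδ
  rw [poch_succ, mul_ne_zero_iff] at hα hβδ_succ
  rw [poch_succ_left, mul_ne_zero_iff] at hγ
  obtain ⟨hα_poch, hα₁⟩ := hα
  obtain ⟨hβδ_poch, hβδ₁⟩ := hβδ_succ
  obtain ⟨hγ₀, hγ_poch⟩ := hγ
  have hk : (k : ℝ) + 1 ≠ 0 := k.cast_add_one_ne_zero
  have hden : racahDen α β γ δ k ≠ 0 :=
    mul_ne_zero (mul_ne_zero (mul_ne_zero hα_poch hβδ_poch) hγ_poch) (mod_cast k.factorial_ne_zero)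
  have hden_shift := eq_div_of_mul_eq hβδ₀
    ((mul_comm _ _).trans (mul_racahDen_shift_succ α β γ δ k))
  have hden_succ : (-γ - (k + 1)) * (v / racahDen α β γ δ (k + 1)) =
      -v / (racahDen α β γ δ k * ((k + 1) * (α + 1 + k) * (β + δ + 1 + k))) := by
    rcases hv with rfl | hγk
    · simp only [zero_div, neg_zero, mul_zero]
    · rw [racahDen_succ, show -γ - ((k : ℝ) + 1) = -(γ + 1 + k) by ring]
      field_simp
  rw [mul_assoc _ (-γ - _), hden_succ, hden_shift]
  field_simp
  ring

/-- The Racah function `r_n(x; α, β, γ, δ)` for a real parameter `γ` and a real variable `x`,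
truncated at `k = n`. The grid `{0, …, 𝒩}` corresponds to `γ = -𝒩 - 1`. Since `y / 0 = 0`,
a term with vanishing numerator counts as zero whatever its denominator. -/
def racahPoly (α β γ δ : ℝ) (n : ℕ) (x : ℝ) : ℝ :=
  ∑ k ∈ range (n + 1),
    latticePoch n (α + β + 1) k / racahDen α β γ δ k * latticePoch x (γ + δ + 1) k

theorem racah_eq_racahPoly (𝒩 : ℕ) (α β δ : ℝ) (n m : ℕ) :
    racah 𝒩 α β δ n m = racahPoly α β (-𝒩 - 1) δ n m := by
  refine Finset.sum_congr rfl fun k _ => ?_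
  rw [latticePoch, latticePoch, racahDen, sub_add_cancel,
    show (n : ℝ) + (α + β + 1) = n + α + β + 1 by ring,
    show (m : ℝ) + (-𝒩 - 1 + δ + 1) = m - 𝒩 + δ by ring]
  ring

theorem lamTilde_eq (𝒩 : ℕ) (β δ : ℝ) (m : ℕ) :
    lamTilde 𝒩 β δ m =
      (m + 1 + δ) * (-(-(𝒩 : ℝ) - 1) - m) * (β + δ + 1) / -(-(𝒩 : ℝ) - 1) := by
  rw [lamTilde]
  ring

theorem racahPoly_eq_sum_range {n M : ℕ} (h : n < M) (α β γ δ x : ℝ) :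
    racahPoly α β γ δ n x = ∑ k ∈ range M,
      latticePoch n (α + β + 1) k / racahDen α β γ δ k * latticePoch x (γ + δ + 1) k := by
  refine Finset.sum_subset (Finset.range_subset_range.2 h) fun k _ hk => ?_
  rw [latticePoch_natCast_eq_zero (by simpa using hk), zero_div, zero_mul]

theorem coeff_combination_racahPoly {α β : ℝ} (δ γ' δ' x : ℝ) {n : ℕ}
    (hαβ : ∀ j : ℕ, j ≤ 2 → 2 * (n : ℝ) + α + β + j ≠ 0) :
    coeffE α β δ n * racahPoly α β γ' δ' (n + 1) x
        + coeffF α β δ n * racahPoly α β γ' δ' n x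
        + coeffG α β δ n * (if n = 0 then 0 else racahPoly α β γ' δ' (n - 1) x) =
      (δ + 1) * (β + δ + 1) + ∑ k ∈ range (n + 1),
        (β + δ + 2 + k) * ((k + 2 + δ) * latticePoch n (α + β + 1) (k + 1)
          - (k + 1) * (α + 1 + k) * (β + δ + 1 + k) * latticePoch n (α + β + 1) k)
          / racahDen α β γ' δ' (k + 1) * latticePoch x (γ' + δ' + 1) (k + 1) := by
  have term_pred : coeffG α β δ n * (if n = 0 then 0 else racahPoly α β γ' δ' (n - 1) x) =
      coeffG α β δ n * ∑ k ∈ range (n + 2), latticePoch (n - 1) (α + β + 1) k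
        / racahDen α β γ' δ' k * latticePoch x (γ' + δ' + 1) k := by
    rcases n with _ | n
    · simp [coeffG]
    · rw [if_neg n.succ_ne_zero, racahPoly_eq_sum_range (M := n + 1 + 2) (by omega)]
      simp only [Nat.add_sub_cancel, Nat.cast_succ, add_sub_cancel_right]
  have coeff_zero : coeffE α β δ n + coeffF α β δ n + coeffG α β δ n = (δ + 1) * (β + δ + 1) := by
    rw [coeffF]
    ring
  rw [term_pred, racahPoly_eq_sum_range (n + 1).lt_succ_self,
    racahPoly_eq_sum_range (M := n + 2) (by omega), Nat.cast_succ, Finset.mul_sum, Finset.mul_sum,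
    Finset.mul_sum, ← Finset.sum_add_distrib, ← Finset.sum_add_distrib, Finset.sum_range_succ',
    add_comm]
  congr 1
  · simpa only [latticePoch_zero, racahDen_zero, div_one, mul_one] using coeff_zero
  · refine Finset.sum_congr rfl fun k _ => ?_
    rw [← coeff_combination_latticePoch_succ δ k hαβ]
    ring

theorem mul_sum_range_of_raising {R : Type*} [CommRing R] {μ : R} {e w : ℕ → R}
    (he : ∀ k, μ * e k = e (k + 1) + w k * e k) {a : ℕ → R} {n : ℕ} (ha : a n = 0) :
    μ * ∑ k ∈ range n, a k * e k =
      w 0 * a 0 * e 0 + ∑ k ∈ range n, (a k + w (k + 1) * a (k + 1)) * e (k + 1) := by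
  have shift : ∑ k ∈ range n, w k * a k * e k =
      w 0 * a 0 * e 0 + ∑ k ∈ range n, w (k + 1) * a (k + 1) * e (k + 1) := by
    have := Finset.sum_range_succ' (fun k => w k * a k * e k) n
    rwa [Finset.sum_range_succ, ha, mul_zero, zero_mul, add_zero, add_comm] at this
  calc
    μ * ∑ k ∈ range n, a k * e k
      = ∑ k ∈ range n, a k * e (k + 1) + ∑ k ∈ range n, w k * a k * e k := by
        rw [Finset.mul_sum, ← Finset.sum_add_distrib]
        exact Finset.sum_congr rfl fun k _ => by linear_combination a k * he k
    _ = w 0 * a 0 * e 0 + ∑ k ∈ range n, (a k + w (k + 1) * a (k + 1)) * e (k + 1) := by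
        rw [shift, add_left_comm, ← Finset.sum_add_distrib]
        simp only [add_mul]

theorem mul_racahPoly (α β γ δ x : ℝ) (n : ℕ) :
    (x + 1 + δ) * (-γ - x) * racahPoly α β γ δ n x =
      -γ * (δ + 1) + ∑ k ∈ range (n + 1),
        (latticePoch n (α + β + 1) k / racahDen α β γ δ k
          + (k + 2 + δ) * (-γ - (k + 1))
            * (latticePoch n (α + β + 1) (k + 1) / racahDen α β γ δ (k + 1)))
          * latticePoch x (γ + δ + 1) (k + 1) := by
  have expansion := mul_sum_range_of_raising (mul_latticePoch_eq_succ_add x γ δ)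
    (a := fun k => latticePoch n (α + β + 1) k / racahDen α β γ δ k) (n := n + 1)
    (by rw [latticePoch_natCast_eq_zero n.lt_succ_self, zero_div])
  rw [racahPoly, expansion]
  congr 1
  · simp only [latticePoch_zero, racahDen_zero, Nat.cast_zero]
    ring
  · refine Finset.sum_congr rfl fun k _ => ?_
    rw [Nat.cast_succ]
    ring

theorem stmt13_general (α β γ δ x : ℝ) (n : ℕ)
    (hα : poch (α + 1) (n + 1) ≠ 0)
    (hβδ : ∀ k ≤ n, poch (-x) (k + 1) ≠ 0 → poch (β + δ + 1) (k + 2) ≠ 0)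
    (hγ : poch γ (n + 1) ≠ 0)
    (hαβ : ∀ j : ℕ, j ≤ 2 → 2 * (n : ℝ) + α + β + j ≠ 0) :
    (x + 1 + δ) * (-γ - x) * (β + δ + 1) / -γ * racahPoly α β γ δ n x =
      coeffE α β δ n * racahPoly α β (γ - 1) (δ + 1) (n + 1) x
      + coeffF α β δ n * racahPoly α β (γ - 1) (δ + 1) n x
      + coeffG α β δ n
        * (if n = 0 then 0 else racahPoly α β (γ - 1) (δ + 1) (n - 1) x) := by
  have hγ₀ : γ ≠ 0 := by simpa using poch_ne_zero_iff.1 hγ 0 n.succ_pos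
  rw [coeff_combination_racahPoly δ _ _ x hαβ, show γ - 1 + (δ + 1) + 1 = γ + δ + 1 by ring,
    mul_div_assoc, mul_right_comm, mul_racahPoly, add_mul, Finset.sum_mul]
  congr 1
  · field_simp
  refine Finset.sum_congr rfl fun k hk => ?_
  have hkn : k ≤ n := Nat.lt_succ_iff.1 (Finset.mem_range.1 hk)
  by_cases hx : poch (-x) (k + 1) = 0
  · rw [latticePoch.eq_def x, hx, zero_mul, mul_zero, zero_mul, mul_zero]
  have degree_factor_eq_zero_or :
      latticePoch n (α + β + 1) (k + 1) = 0 ∨ γ + 1 + k ≠ 0 := by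
    rcases hkn.eq_or_lt with rfl | hlt
    · exact Or.inl (latticePoch_natCast_eq_zero k.lt_succ_self _)
    · have := poch_ne_zero_iff.1 hγ (k + 1) (by omega)
      exact Or.inr (by rwa [add_assoc, add_comm 1, ← Nat.cast_succ])
  rw [mul_right_comm, mul_comm _ (_ / _), div_racahDen_add_eq_div_racahDen_shift
    (poch_ne_zero_of_le (by omega) hα) (hβδ k hkn hx)
    (poch_ne_zero_of_le (by omega) hγ) degree_factor_eq_zero_or]

/-- Contiguity relation for the Racah functions: for `0 ≤ n, m ≤ 𝒩`,
`λ̃(m)·r_n(m; α, β, −𝒩−1, δ) = E_n·r̃_{n+1}(m) + F_n·r̃_n(m) + G_n·r̃_{n−1}(m)`,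
where `r̃_n(m) = r_n(m; α, β, −𝒩−2, δ+1)` and `r̃_{−1} := 0`. -/
theorem stmt13 (𝒩 : ℕ) (h𝒩 : 0 < 𝒩) (α β δ : ℝ)
    (hden1 : ∀ k ≤ 𝒩 + 1, poch (α + 1) k ≠ 0)
    (hden2 : ∀ k ≤ 𝒩 + 1, poch (β + δ + 1) k ≠ 0)
    (hden3 : ∀ n ≤ 𝒩, ∀ j : ℕ, j ≤ 2 → 2 * (n : ℝ) + α + β + (j : ℝ) ≠ 0) :
    ∀ n m : ℕ, n ≤ 𝒩 → m ≤ 𝒩 →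
      lamTilde 𝒩 β δ m * racah 𝒩 α β δ n m =
        coeffE α β δ n * racah (𝒩 + 1) α β (δ + 1) (n + 1) m
        + coeffF α β δ n * racah (𝒩 + 1) α β (δ + 1) n m
        + coeffG α β δ n * (if n = 0 then 0 else racah (𝒩 + 1) α β (δ + 1) (n - 1) m) := by
  intro n m hn hm
  have hγ : poch (-(𝒩 : ℝ) - 1) (n + 1) ≠ 0 := by
    rw [← neg_add', ← Nat.cast_succ, poch_neg_natCast_ne_zero_iff]
    omega
  have hβδ (k : ℕ) (_ : k ≤ n) (hk : poch (-(m : ℝ)) (k + 1) ≠ 0) :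
      poch (β + δ + 1) (k + 2) ≠ 0 :=
    hden2 _ (Nat.succ_le_succ ((poch_neg_natCast_ne_zero_iff.1 hk).trans hm))
  simp only [lamTilde_eq, racah_eq_racahPoly, Nat.cast_succ, neg_add']
  exact stmt13_general α β (-𝒩 - 1) δ m n (hden1 _ (Nat.succ_le_succ hn)) hβδ hγ (hden3 n hn)
end
end
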